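/- Fix integers m ≥ 1, d ≥ 2, a matrix S as below, and a real ε > 0. There exist δ > 0 and a constant c > 0, depending only on d, m and ε, such that the following holds. Let p be a prime, 𝓕 ∈ 𝔉(S,m) over F_p a system of total degree d with s_{0,1}·s_{1,2}⋯s_{m−1,m} ≠ 0, and let {w_n} = {(u_{n,0},…,u_{n,m})} be the sequence generated by iterating 𝓕 from some initial vector, assumed purely periodic with period τ. Then for every positive integer N with τ ≥ N ≥ p^{m+ε} and every vector b = (b_0,…,b_m) ∈ F_p^{m+1} with b ≠ 0, |T_b(N)| ≤ c·N·p^{−δ}. -/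

import Mathlib

open MvPolynomial

/-- Membership of a polynomial system `F = (F_0, …, F_m)` over `R` in the class `𝔉(S,m)`,
where `s i j` records the entries of the upper triangular matrix `S` (for `i < j`). -/
def IsFSystem {R : Type*} [CommRing R] (m : ℕ) (s : ℕ → ℕ → ℕ)
    (F : Fin (m + 1) → MvPolynomial (Fin (m + 1)) R) : Prop :=
  (∃ g h : R, g ≠ 0 ∧
      F (Fin.last m) = MvPolynomial.C g * MvPolynomial.X (Fin.last m) + MvPolynomial.C h) ∧
  ∀ i : Fin (m + 1), (i : ℕ) < m →
    ∃ (G H Gt : MvPolynomial (Fin (m + 1)) R) (g : R),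
      g ≠ 0 ∧
      F i = MvPolynomial.X i * G + H ∧
      (∀ d ∈ G.support, ∀ j : Fin (m + 1), j ≤ i → d j = 0) ∧
      (∀ d ∈ H.support, ∀ j : Fin (m + 1), j ≤ i → d j = 0) ∧
      G = MvPolynomial.C g *
          (∏ j ∈ Finset.univ.filter (fun j : Fin (m + 1) => i < j),
            MvPolynomial.X j ^ s i.val j.val) + Gt ∧
      (∀ d ∈ Gt.support, ∀ j : Fin (m + 1), i < j → d j < s i.val j.val) ∧
      (∀ d ∈ H.support, ∀ j : Fin (m + 1), i < j → d j ≤ s i.val j.val)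

/-- The iterated polynomials `F_i^{(k)}` of a sequence of polynomial systems:
`F_i^{(0)} = X_i` and `F_i^{(k)} = F_{k,i}(F_0^{(k-1)}, …, F_m^{(k-1)})`. -/
noncomputable def iterSys {R : Type*} [CommRing R] (m : ℕ)
    (Fs : ℕ → Fin (m + 1) → MvPolynomial (Fin (m + 1)) R) :
    ℕ → Fin (m + 1) → MvPolynomial (Fin (m + 1)) R
  | 0 => fun i => MvPolynomial.X i
  | k + 1 => fun i => MvPolynomial.bind₁ (iterSys m Fs k) (Fs (k + 1) i)

/-- The additive character `e_p(z) = exp(2πiz/p)` evaluated at an element of `F_p`. -/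
noncomputable def eP (p : ℕ) (x : ZMod p) : ℂ :=
  Complex.exp (2 * Real.pi * Complex.I * (x.val : ℂ) / (p : ℂ))

/-- `e_M(z) = exp(2πiz/M)` for a natural number `z`. -/
noncomputable def eM (M z : ℕ) : ℂ :=
  Complex.exp (2 * Real.pi * Complex.I * (z : ℂ) / (M : ℂ))

/-- The discrepancy of the first `N` points of a sequence in `[0,1)^s`: the supremum over
boxes `B = [a_1,b_1) × ⋯ × [a_s,b_s) ⊆ [0,1)^s` of `|T(B)/N - vol B|`. -/
noncomputable def discrepancy (s N : ℕ) (P : ℕ → Fin s → ℝ) : ℝ :=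
  sSup {D : ℝ | ∃ a b : Fin s → ℝ,
    (∀ j, 0 ≤ a j ∧ a j ≤ b j ∧ b j ≤ 1) ∧
    D = |(((Finset.range N).filter fun n => ∀ j, a j ≤ P n j ∧ P n j < b j).card : ℝ) / N -
        ∏ j, (b j - a j)|}

/-!
Let `i` be the first index with `b i ≠ 0`.

If `i < m`, the `k`-th iterate of the system is affine in `v_i`, with slope the product of
`G_i(Φ^l v)` over `l < k`. Averaging over shifts and Hölder's inequality reduce the claim to a
`2ν`-th moment over all vectors `v` of sums of `K ≈ p ^ (ε / 2)` iterates. Opening the moment,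
every tuple off the diagonal gives an additive character of a combination of iterates, and summing
it along `v_i` leaves only the `v` at which the same combination of slopes vanishes. On a line
parallel to the `X_{i+1}` axis the slopes are polynomials of distinct degrees, because
`s_{i,i+1} ≠ 0`, so there are `O(K p ^ m)` such `v`.

If `i = m`, the sum involves only the affine recurrence `x ↦ g x + h`. As the `N ≥ p ^ (m + ε)`
vectors are distinct, its period is at least `p ^ ε`. For `g = 1` the sum over a period vanishes,
and for `g ≠ 1` it is a sum over the subgroup generated by `g`, which the
Bourgain–Glibichuk–Konyagin theorem bounds. For that theorem, a large sum over a subgroup `H` has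
an `H`-invariant large spectrum rich in differences, hence by Balog–Szemerédi–Gowers a set `A` of
small doubling whose dilates by many elements of `H` overlap. The dilations that almost stabilize
`A` are closed, up to the loss, under the field operations, so they grow to all of `F_p`. Averaging
the additive energy of `A` and its dilates, `A` is then of bounded size or about as large as `F_p`;
since `A` is about as large as the spectrum, `H` is small in both cases.
-/

open Finset
open scoped Pointwise Combinatorics.Additive

section BalogSzemerediGowers

variable {α β : Type*}

lemma sq_mul_card_le_sum_sq_of_card_mul_le {s : Finset α} {t : Finset β} (ht : t.Nonempty)
    {f : β → ℝ} {K : ℝ} (h : #s * #t ≤ K * ∑ b ∈ t, f b) :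
    (#s ^ 2 * #t : ℝ) ≤ K ^ 2 * ∑ b ∈ t, f b ^ 2 := by
  refine le_of_mul_le_mul_left ?_ (Nat.cast_pos.2 ht.card_pos : (0 : ℝ) < #t)
  calc (#t * (#s ^ 2 * #t) : ℝ) = (#s * #t) ^ 2 := by ring
    _ ≤ (K * ∑ b ∈ t, f b) ^ 2 := by gcongr
    _ = K ^ 2 * (∑ b ∈ t, f b) ^ 2 := by ring
    _ ≤ K ^ 2 * (#t * ∑ b ∈ t, f b ^ 2) := by gcongr; exact sq_sum_le_card_mul_sum_sq
    _ = #t * (K ^ 2 * ∑ b ∈ t, f b ^ 2) := by ring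

lemma exists_bipartiteBelow_few_bad_pairs (r : α → β → Prop) [DecidableRel r]
    {s : Finset α} {t : Finset β} (hs : s.Nonempty) (ht : t.Nonempty) {K : ℝ} (hK : 0 < K)
    (hE : (#s * #t : ℝ) ≤ K * ∑ b ∈ t, (#(s.bipartiteBelow r b) : ℝ)) :
    ∃ U ⊆ s, (#s : ℝ) ≤ 2 * K * #U ∧
      8 * #{x ∈ U ×ˢ U | 16 * K ^ 2 * #{b ∈ t | r x.1 b ∧ r x.2 b} < (#t : ℝ)}
        ≤ #U ^ 2 := by
  classical
  let U b := s.bipartiteBelow r b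
  let common (x : α × α) : Finset β := {b ∈ t | r x.1 b ∧ r x.2 b}
  let bad (x : α × α) := 16 * K ^ 2 * (#(common x) : ℝ) < #t
  let B b := {x ∈ U b ×ˢ U b | bad x}
  have hs' : (0 : ℝ) < #s := mod_cast hs.card_pos
  have ht' : (0 : ℝ) < #t := mod_cast ht.card_pos
  have hU : (#s ^ 2 * #t : ℝ) ≤ K ^ 2 * ∑ b ∈ t, (#(U b) : ℝ) ^ 2 :=
    sq_mul_card_le_sum_sq_of_card_mul_le ht hE
  have hB_eq : ∑ b ∈ t, #(B b) = ∑ x ∈ s ×ˢ s with bad x, #(common x) := by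
    refine .trans (sum_congr rfl fun b _ ↦ congrArg card ?_)
      (sum_card_bipartiteAbove_eq_sum_card_bipartiteBelow
        fun (x : α × α) b ↦ r x.1 b ∧ r x.2 b).symm
    ext x
    simp only [B, U, mem_filter, mem_product, mem_bipartiteBelow]
    tauto
  have hB : 16 * K ^ 2 * ∑ b ∈ t, (#(B b) : ℝ) ≤ #s ^ 2 * #t := by
    calc 16 * K ^ 2 * ∑ b ∈ t, (#(B b) : ℝ)
        = ∑ x ∈ s ×ˢ s with bad x, 16 * K ^ 2 * (#(common x) : ℝ) := by
          rw [← mul_sum]; congr 1; exact_mod_cast hB_eq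
      _ ≤ ∑ _x ∈ (s ×ˢ s).filter bad, (#t : ℝ) := sum_le_sum fun _ hx ↦ (mem_filter.1 hx).2.le
      _ ≤ ∑ _x ∈ s ×ˢ s, (#t : ℝ) :=
          sum_le_sum_of_subset_of_nonneg (filter_subset _ _) fun _ _ _ ↦ ht'.le
      _ = #s ^ 2 * #t := by simp [sq]
  obtain ⟨b, -, hb⟩ : ∃ b ∈ t, (#s : ℝ) ^ 2 ≤ 2 * K ^ 2 * (#(U b) ^ 2 - 8 * #(B b)) := by
    refine exists_le_of_sum_le ht ?_
    rw [← mul_sum, sum_sub_distrib, ← mul_sum, sum_const, nsmul_eq_mul]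
    linarith
  have hdiff : (0 : ℝ) < #(U b) ^ 2 - 8 * #(B b) :=
    pos_of_mul_pos_right ((pow_pos hs' 2).trans_le hb) (by positivity)
  refine ⟨U b, filter_subset _ _, abs_le_of_sq_le_sq' ?_ (by positivity) |>.2, ?_⟩
  · nlinarith [mul_nonneg (sq_nonneg K) (Nat.cast_nonneg (α := ℝ) #(B b)),
      mul_nonneg (sq_nonneg K) (sq_nonneg (#(U b) : ℝ))]
  · exact_mod_cast (sub_pos.1 hdiff).le

lemma exists_subset_many_common_of_few_bad_pairs (U : Finset α) (bad : α → α → Prop)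
    [DecidableRel bad] (hbad : 8 * #{x ∈ U ×ˢ U | bad x.1 x.2} ≤ #U ^ 2) :
    ∃ A ⊆ U, #U ≤ 2 * #A ∧
      ∀ a ∈ A, ∀ a' ∈ A, #U ≤ 2 * #{w ∈ U | ¬ bad a w ∧ ¬ bad a' w} := by
  classical
  let B a := {w ∈ U | bad a w}
  let A := {a ∈ U | 4 * #(B a) ≤ #U}
  have hsum : #{x ∈ U ×ˢ U | bad x.1 x.2} = ∑ a ∈ U, #(B a) := by
    simp only [B, card_filter, sum_product]
  have hcompl : #(U \ A) * #U ≤ 4 * ∑ a ∈ U, #(B a) := by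
    calc #(U \ A) * #U ≤ ∑ a ∈ U \ A, 4 * #(B a) := by
          rw [← smul_eq_mul]
          refine card_nsmul_le_sum _ _ _ fun a ha ↦ ?_
          simp only [A, mem_sdiff, mem_filter, not_and, not_le] at ha
          exact (ha.2 ha.1).le
      _ ≤ ∑ a ∈ U, 4 * #(B a) := sum_le_sum_of_subset sdiff_subset
      _ = 4 * ∑ a ∈ U, #(B a) := (mul_sum _ _ _).symm
  refine ⟨A, filter_subset _ _, ?_, fun a ha a' ha' ↦ ?_⟩
  · rcases U.card.eq_zero_or_pos with h0 | hpos
    · omega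
    · have : 2 * #(U \ A) ≤ #U := by
        refine Nat.le_of_mul_le_mul_right ?_ hpos
        rw [← sq]
        linarith
      have : #(U \ A) + #A = #U := card_sdiff_add_card_eq_card (filter_subset _ _)
      omega
  · have hcover : U ⊆ {w ∈ U | ¬ bad a w ∧ ¬ bad a' w} ∪ (B a ∪ B a') := by
      intro w hw
      simp only [B, mem_union, mem_filter]
      tauto
    have h₁ := (card_le_card hcover).trans <| (card_union_le _ _).trans <|
      Nat.add_le_add_left (card_union_le _ _) _
    have h₂ := (mem_filter.1 ha).2
    have h₃ := (mem_filter.1 ha').2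
    omega

variable {G : Type*} [AddCommGroup G] [DecidableEq G]

/-- The number of ways of writing `x` as `d₁ - d₂ + (d₃ - d₄)` with all `dᵢ` in `D`. -/
def fourfoldRepCount (D : Finset G) (x : G) : ℕ :=
  #{y ∈ (D ×ˢ D) ×ˢ D ×ˢ D | y.1.1 - y.1.2 + (y.2.1 - y.2.2) = x}

lemma sum_fourfoldRepCount_le (D s : Finset G) : ∑ x ∈ s, fourfoldRepCount D x ≤ #D ^ 4 := by
  calc ∑ x ∈ s, fourfoldRepCount D x ≤ #((D ×ˢ D) ×ˢ D ×ˢ D) :=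
        (sum_card_fiberwise_eq_card_filter _ _ _).trans_le (card_filter_le _ _)
    _ = #D ^ 4 := by simp only [card_product]; ring

-- `a - a' = (a - z) - (w - z) + ((w - z') - (a' - z'))`, and `w`, `z`, `z'` can be recovered.
lemma mul_sq_le_fourfoldRepCount {L D W : Finset G} {a a' : G} {k : ℝ} (hk : 0 ≤ k)
    (ha : ∀ w ∈ W, k ≤ #{z ∈ L | a - z ∈ D ∧ w - z ∈ D})
    (ha' : ∀ w ∈ W, k ≤ #{z ∈ L | a' - z ∈ D ∧ w - z ∈ D}) :
    #W * k ^ 2 ≤ fourfoldRepCount D (a - a') := by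
  let T := W.sigma fun w ↦ {z ∈ L | a - z ∈ D ∧ w - z ∈ D} ×ˢ {z ∈ L | a' - z ∈ D ∧ w - z ∈ D}
  have hT : #W * k ^ 2 ≤ #T := by
    rw [card_sigma, Nat.cast_sum, ← nsmul_eq_mul]
    refine card_nsmul_le_sum _ _ _ fun w hw ↦ ?_
    rw [card_product, Nat.cast_mul, sq]
    gcongr
    exacts [ha w hw, ha' w hw]
  refine hT.trans (Nat.cast_le.2 ?_)
  refine card_le_card_of_injOn
    (fun t ↦ ((a - t.2.1, t.1 - t.2.1), (t.1 - t.2.2, a' - t.2.2))) ?_ ?_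
  · rintro ⟨w, z, z'⟩ ht
    simp only [T, coe_sigma, Set.mem_sigma_iff, mem_coe, mem_product, mem_filter] at ht ⊢
    refine ⟨⟨⟨ht.2.1.2.1, ht.2.1.2.2⟩, ht.2.2.2.2, ht.2.2.2.1⟩, ?_⟩
    abel
  · rintro ⟨w, z, z'⟩ _ ⟨w₁, z₁, z₁'⟩ _ h
    simp only [Prod.mk.injEq, sub_right_inj] at h
    obtain ⟨⟨rfl, hw⟩, -, rfl⟩ := h
    obtain rfl : w = w₁ := sub_left_injective hw
    rfl

lemma card_sub_mul_sq_le_card_pow {A L D U : Finset G} {c k : ℝ} (hk : 0 ≤ k)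
    (hA : ∀ a ∈ A, ∀ a' ∈ A, c ≤ #{w ∈ U | k ≤ #{z ∈ L | a - z ∈ D ∧ w - z ∈ D} ∧
      k ≤ #{z ∈ L | a' - z ∈ D ∧ w - z ∈ D}}) :
    #(A - A) * (c * k ^ 2) ≤ (#D : ℝ) ^ 4 := by
  have hrep : ∀ x ∈ A - A, c * k ^ 2 ≤ (fourfoldRepCount D x : ℝ) := by
    intro x hx
    obtain ⟨a, ha, a', ha', rfl⟩ := mem_sub.1 hx
    exact (mul_le_mul_of_nonneg_right (hA a ha a' ha') (by positivity)).trans <|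
      mul_sq_le_fourfoldRepCount hk (fun w hw ↦ (mem_filter.1 hw).2.1)
        fun w hw ↦ (mem_filter.1 hw).2.2
  rw [← nsmul_eq_mul]
  exact (card_nsmul_le_sum _ _ _ hrep).trans (by exact_mod_cast sum_fourfoldRepCount_le D _)

theorem balog_szemeredi_gowers_sub {L D : Finset G} {K : ℝ} (hK : 4 ≤ K) (hL : L.Nonempty)
    (hpairs : (#L : ℝ) ^ 2 ≤ K * #{x ∈ L ×ˢ L | x.1 - x.2 ∈ D}) (hD : (#D : ℝ) ≤ K * #L) :
    ∃ A ⊆ L, A.Nonempty ∧ (#L : ℝ) ≤ K ^ 2 * #A ∧ (#(A - A) : ℝ) ≤ K ^ 16 * #A := by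
  classical
  have hN : (0 : ℝ) < #L := mod_cast hL.card_pos
  obtain ⟨U, hUL, hU, hbad⟩ :=
    exists_bipartiteBelow_few_bad_pairs (fun a z ↦ a - z ∈ D) hL hL (K := K) (by linarith) <| by
      have hcard : #{x ∈ L ×ˢ L | x.1 - x.2 ∈ D}
          = ∑ z ∈ L, #(L.bipartiteBelow (fun a z ↦ a - z ∈ D) z) := by
        simp only [bipartiteBelow, card_filter, sum_product_right]
      rw [← sq, ← Nat.cast_sum, ← hcard]
      exact hpairs
  have hU₀ : (0 : ℝ) < #U := pos_of_mul_pos_right (hN.trans_le hU) (by linarith)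
  obtain ⟨A, hAU, hUA, hA⟩ := exists_subset_many_common_of_few_bad_pairs U
    (fun a w ↦ 16 * K ^ 2 * (#{z ∈ L | a - z ∈ D ∧ w - z ∈ D} : ℝ) < #L) hbad
  have hUA' : (#U : ℝ) ≤ 2 * #A := mod_cast hUA
  have hLA : (#L : ℝ) ≤ 4 * K * #A := by nlinarith
  refine ⟨A, hAU.trans hUL, card_pos.1 (by exact_mod_cast (by linarith : (0 : ℝ) < #A)),
    by nlinarith, ?_⟩
  have hsum : #(A - A) * (#U / 2 * (#L / (16 * K ^ 2)) ^ 2) ≤ (#D : ℝ) ^ 4 := by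
    refine card_sub_mul_sq_le_card_pow (L := L) (U := U) (by positivity) fun a ha a' ha' ↦ ?_
    simp only [div_le_iff₀' (by positivity : (0 : ℝ) < 16 * K ^ 2), ← not_lt]
    rw [not_lt, div_le_iff₀' two_pos]
    exact_mod_cast hA a ha a' ha'
  have hmul : #(A - A) * (#U * #L ^ 2) ≤ 1024 * K ^ 9 * #L * ((#U : ℝ) * #L ^ 2) := by
    calc (#(A - A) * (#U * #L ^ 2) : ℝ)
        = 512 * K ^ 4 * (#(A - A) * (#U / 2 * (#L / (16 * K ^ 2)) ^ 2)) := by field_simp; ring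
      _ ≤ 512 * K ^ 4 * (K * #L) ^ 4 := by gcongr; exact hsum.trans (by gcongr)
      _ = 512 * K ^ 8 * #L ^ 3 * #L := by ring
      _ ≤ 512 * K ^ 8 * #L ^ 3 * (2 * K * #U) := by gcongr
      _ = 1024 * K ^ 9 * #L * (#U * #L ^ 2) := by ring
  calc (#(A - A) : ℝ) ≤ 1024 * K ^ 9 * #L := le_of_mul_le_mul_right hmul (by positivity)
    _ ≤ 1024 * K ^ 9 * (4 * K * #A) := by gcongr
    _ = 4 ^ 6 * K ^ 10 * #A := by ring
    _ ≤ K ^ 6 * K ^ 10 * #A := by gcongr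
    _ = K ^ 16 * #A := by ring

end BalogSzemerediGowers

section AlmostStabilizes

variable {F : Type*} [Field F] [DecidableEq F] {A : Finset F} {M M' : ℝ} {x y z : F}

/-- The dilation by `x` almost stabilizes `A`, with loss `M`: the difference set of `A` and `x • A`
is at most `M` times as large as `A`. -/
def AlmostStabilizes (A : Finset F) (M : ℝ) (x : F) : Prop :=
  #(A - x • A) ≤ M * #A

lemma card_sub_comm {G : Type*} [AddCommGroup G] [DecidableEq G] (A B : Finset G) :
    #(A - B) = #(B - A) := by
  rw [← card_neg, neg_sub]

lemma smul_finset_sub (x : F) (A B : Finset F) : x • (A - B) = x • A - x • B :=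
  image_image₂_distrib (smul_sub x)

namespace AlmostStabilizes

lemma mono (h : AlmostStabilizes A M x) (hM : M ≤ M') : AlmostStabilizes A M' x :=
  h.trans <| by gcongr

lemma zero (hM : 1 ≤ M) : AlmostStabilizes A M 0 := by
  rcases A.eq_empty_or_nonempty with rfl | hA
  · simp [AlmostStabilizes]
  · rw [AlmostStabilizes, zero_smul_finset hA, sub_zero]
    exact le_mul_of_one_le_left (Nat.cast_nonneg _) hM

lemma mul (hA : A.Nonempty) (hM : 1 ≤ M) (hM' : 1 ≤ M') (hx : AlmostStabilizes A M x)
    (hy : AlmostStabilizes A M' y) : AlmostStabilizes A (M * M') (x * y) := by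
  rcases eq_or_ne x 0 with rfl | hx₀
  · rw [zero_mul]
    exact zero (one_le_mul_of_one_le_of_one_le hM hM')
  have hpos : (0 : ℝ) < #A := mod_cast hA.card_pos
  have htri := ruzsa_triangle_inequality_sub_sub_sub A (x • A) ((x * y) • A)
  rw [mul_smul, card_sub_comm (x • y • A) (x • A), ← smul_finset_sub, card_smul_finset₀ hx₀,
    card_smul_finset₀ hx₀] at htri
  refine le_of_mul_le_mul_right ?_ hpos
  calc (#(A - (x * y) • A) * #A : ℝ) ≤ #(A - x • A) * #(A - y • A) := by
        rw [mul_smul]; exact_mod_cast htri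
    _ ≤ M * #A * (M' * #A) := mul_le_mul hx hy (by positivity) (by positivity)
    _ = M * M' * #A * #A := by ring

lemma inv (hx : AlmostStabilizes A M x) : AlmostStabilizes A M x⁻¹ := by
  rcases eq_or_ne x 0 with rfl | hx₀
  · rwa [inv_zero]
  · rw [AlmostStabilizes, card_sub_comm, ← card_smul_finset₀ hx₀, smul_finset_sub,
      smul_inv_smul₀ hx₀]
    exact hx

lemma exists_cover (hA : A.Nonempty) (hx : AlmostStabilizes A M x) :
    ∃ T : Finset F, #T ≤ M ∧ x • A ⊆ T + (A - A) := by
  have hcard : #(x • A + -A) ≤ M * #(-A) := by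
    rwa [← sub_eq_add_neg, card_sub_comm, card_neg]
  obtain ⟨T, -, hT, hsub⟩ := ruzsa_covering_add hA.neg hcard
  exact ⟨T, hT, by rwa [neg_sub_neg] at hsub⟩

lemma of_smul_subset (hA : A.Nonempty) (h₁ : AlmostStabilizes A M 1) {T : Finset F}
    (hT : #T ≤ M ^ 2) (hz : z • A ⊆ T + (2 • A - 2 • A)) : AlmostStabilizes A (M ^ 7) z := by
  have hpos : (0 : ℝ) < #A := mod_cast hA.card_pos
  have hdouble : (#(A - A) / #A : ℝ) ≤ M := by
    rw [div_le_iff₀ hpos]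
    simpa only [AlmostStabilizes, one_smul] using h₁
  have hplu : (#(3 • A - 2 • A) : ℝ) ≤ M ^ 5 * #A := by
    have h := (NNRat.cast_le (K := ℝ)).2 (pluennecke_ruzsa_inequality_nsmul_sub_nsmul_sub hA A 3 2)
    push_cast at h
    calc (#(3 • A - 2 • A) : ℝ) ≤ (#(A - A) / #A : ℝ) ^ (3 + 2) * #A := h
      _ ≤ M ^ 5 * #A := by gcongr
  have hsub : A - z • A ⊆ (3 • A - 2 • A) - T := by
    calc A - z • A ⊆ A - (T + (2 • A - 2 • A)) := sub_subset_sub_left hz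
      _ = (3 • A - 2 • A) - T := by
        rw [add_comm T, ← sub_sub, sub_sub_eq_add_sub, ← succ_nsmul']
  calc (#(A - z • A) : ℝ) ≤ #(3 • A - 2 • A) * #T := by
        exact_mod_cast (card_le_card hsub).trans card_sub_le
    _ ≤ M ^ 5 * #A * M ^ 2 := mul_le_mul hplu hT (by positivity) ((Nat.cast_nonneg _).trans hplu)
    _ = M ^ 7 * #A := by ring

lemma add (hA : A.Nonempty) (h₁ : AlmostStabilizes A M 1) (hx : AlmostStabilizes A M x)
    (hy : AlmostStabilizes A M y) : AlmostStabilizes A (M ^ 7) (x + y) := by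
  obtain ⟨T, hT, hxT⟩ := hx.exists_cover hA
  obtain ⟨T', hT', hyT'⟩ := hy.exists_cover hA
  refine of_smul_subset hA h₁ (T := T + T') ?_ ?_
  · calc (#(T + T') : ℝ) ≤ #T * #T' := mod_cast card_add_le
      _ ≤ M ^ 2 := by rw [sq]; gcongr; exact (Nat.cast_nonneg _).trans hT
  · calc (x + y) • A ⊆ x • A + y • A := image_subset_iff.2 fun a ha ↦ by
          rw [add_smul]; exact add_mem_add (smul_mem_smul_finset ha) (smul_mem_smul_finset ha)
      _ ⊆ (T + (A - A)) + (T' + (A - A)) := add_subset_add hxT hyT'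
      _ = T + T' + (2 • A - 2 • A) := by rw [add_add_add_comm, two_nsmul, add_sub_add_comm]

lemma sub (hA : A.Nonempty) (h₁ : AlmostStabilizes A M 1) (hx : AlmostStabilizes A M x)
    (hy : AlmostStabilizes A M y) : AlmostStabilizes A (M ^ 7) (x - y) := by
  obtain ⟨T, hT, hxT⟩ := hx.exists_cover hA
  obtain ⟨T', hT', hyT'⟩ := hy.exists_cover hA
  refine of_smul_subset hA h₁ (T := T - T') ?_ ?_
  · calc (#(T - T') : ℝ) ≤ #T * #T' := mod_cast card_sub_le
      _ ≤ M ^ 2 := by rw [sq]; gcongr; exact (Nat.cast_nonneg _).trans hT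
  · calc (x - y) • A ⊆ x • A - y • A := image_subset_iff.2 fun a ha ↦ by
          rw [sub_smul]; exact sub_mem_sub (smul_mem_smul_finset ha) (smul_mem_smul_finset ha)
      _ ⊆ (T + (A - A)) - (T' + (A - A)) := sub_subset_sub hxT hyT'
      _ = T - T' + (2 • A - 2 • A) := by
        rw [add_sub_add_comm, sub_sub_sub_eq, two_nsmul]

end AlmostStabilizes

end AlmostStabilizes

section Growth

variable {F : Type*} [Field F] [DecidableEq F] {A X : Finset F} {M : ℝ}

lemma zero_mem_sub_div_sub (hX : X.Nonempty) : 0 ∈ (X - X) / (X - X) := by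
  obtain ⟨a, ha⟩ := hX
  exact mem_div.2 ⟨a - a, sub_mem_sub ha ha, a - a, sub_mem_sub ha ha, by simp⟩

lemma card_add_smul_of_notMem_div {ξ : F} (hξ : ξ ∉ (X - X) / (X - X)) :
    #(X + ξ • X) = #X ^ 2 := by
  rcases X.eq_empty_or_nonempty with rfl | hX
  · simp
  have hξ₀ : ξ ≠ 0 := by
    rintro rfl
    exact hξ (zero_mem_sub_div_sub hX)
  rw [card_add_iff.2, card_smul_finset₀ hξ₀, sq]
  rintro ⟨a, _⟩ ⟨ha, h₁⟩ ⟨a', _⟩ ⟨ha', h₂⟩ h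
  obtain ⟨b, hb, rfl⟩ := mem_smul_finset.1 (mem_coe.1 h₁)
  obtain ⟨b', hb', rfl⟩ := mem_smul_finset.1 (mem_coe.1 h₂)
  simp only [smul_eq_mul] at h
  obtain rfl | hbb := eq_or_ne b b'
  · simpa using h
  · refine absurd (mem_div.2 ⟨a - a', sub_mem_sub ha ha', b' - b, sub_mem_sub hb' hb, ?_⟩) hξ
    rw [div_eq_iff (sub_ne_zero.2 hbb.symm)]
    linear_combination h

lemma AlmostStabilizes.of_mem_div (hA : A.Nonempty) (hM : 1 ≤ M) (h₁ : AlmostStabilizes A M 1)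
    (hX : ∀ x ∈ X, AlmostStabilizes A M x) {q : F} (hq : q ∈ (X - X) / (X - X)) :
    AlmostStabilizes A (M ^ 14) q := by
  obtain ⟨_, hab, _, hcd, rfl⟩ := mem_div.1 hq
  obtain ⟨a, ha, b, hb, rfl⟩ := mem_sub.1 hab
  obtain ⟨c, hc, d, hd, rfl⟩ := mem_sub.1 hcd
  have h7 : 1 ≤ M ^ 7 := one_le_pow₀ hM
  have := mul hA h7 h7 (sub hA h₁ (hX a ha) (hX b hb)) (sub hA h₁ (hX c hc) (hX d hd)).inv
  rwa [← pow_add, ← div_eq_mul_inv] at this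

lemma exists_mem_add_one_notMem_of_ne_univ {n : ℕ} [NeZero n] {s : Set (ZMod n)} (h₀ : 0 ∈ s)
    (hs : s ≠ Set.univ) : ∃ q ∈ s, q + 1 ∉ s := by
  by_contra! hsucc
  refine hs (Set.eq_univ_of_forall fun x ↦ ?_)
  rw [← ZMod.natCast_zmod_val x]
  induction x.val with
  | zero => simpa using h₀
  | succ k ih => simpa using hsucc _ ih

variable {p : ℕ} [Fact p.Prime] {A X : Finset (ZMod p)}

lemma AlmostStabilizes.forall_or_exists_card_sq (hA : A.Nonempty) (hM : 1 ≤ M)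
    (h₁ : AlmostStabilizes A M 1) (hX : ∀ x ∈ X, AlmostStabilizes A M x) (hXne : X.Nonempty) :
    (∀ x, AlmostStabilizes A (M ^ 14) x) ∨
      ∃ X' : Finset (ZMod p), #X' = #X ^ 2 ∧ ∀ x ∈ X', AlmostStabilizes A (M ^ 693) x := by
  set Q := (X - X) / (X - X)
  have hQ : ∀ q ∈ Q, AlmostStabilizes A (M ^ 14) q := fun q ↦ of_mem_div hA hM h₁ hX
  by_cases hall : (Q : Set (ZMod p)) = Set.univ
  · exact .inl fun x ↦ hQ x (by rw [← mem_coe, hall]; trivial)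
  obtain ⟨q, hq, hq₁⟩ := exists_mem_add_one_notMem_of_ne_univ (zero_mem_sub_div_sub hXne) hall
  refine .inr ⟨X + (q + 1) • X, card_add_smul_of_notMem_div hq₁, fun x hx ↦ ?_⟩
  obtain ⟨a, ha, _, h, rfl⟩ := mem_add.1 hx
  obtain ⟨b, hb, rfl⟩ := mem_smul_finset.1 h
  have hξ : AlmostStabilizes A (M ^ 98) (q + 1) := by
    have := add hA (h₁.mono (le_self_pow₀ hM (by norm_num))) (hQ q hq)
      (h₁.mono (le_self_pow₀ hM (by norm_num)))
    rwa [← pow_mul] at this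
  have hξb : AlmostStabilizes A (M ^ 99) ((q + 1) • b) :=
    mul hA (one_le_pow₀ hM) hM hξ (hX b hb)
  have hM99 : M ≤ M ^ 99 := le_self_pow₀ hM (by norm_num)
  have := add hA (h₁.mono hM99) ((hX a ha).mono hM99) hξb
  rwa [← pow_mul] at this

theorem AlmostStabilizes.forall_of_le_card_pow (hA : A.Nonempty) (n : ℕ) (hM : 1 ≤ M)
    (h₁ : AlmostStabilizes A M 1) (hX : ∀ x ∈ X, AlmostStabilizes A M x) (hp : p ≤ #X ^ 2 ^ n)
    (x : ZMod p) : AlmostStabilizes A (M ^ 693 ^ n) x := by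
  induction n generalizing M X with
  | zero =>
    have hXuniv : X = univ := eq_univ_of_card _ <|
      (card_le_univ _).antisymm (by rw [ZMod.card]; simpa using hp)
    simpa using hX x (hXuniv ▸ mem_univ x)
  | succ n ih =>
    have hXne : X.Nonempty := by
      rw [nonempty_iff_ne_empty]
      rintro rfl
      simp [(Fact.out : p.Prime).ne_zero] at hp
    obtain hall | ⟨X', hcard, hX'⟩ := forall_or_exists_card_sq hA hM h₁ hX hXne
    · refine (hall x).mono (pow_le_pow_right₀ hM ?_)
      calc 14 ≤ 693 ^ 1 := by norm_num
        _ ≤ 693 ^ (n + 1) := Nat.pow_le_pow_right (by norm_num) (by omega)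
    · have := ih (one_le_pow₀ hM) (h₁.mono (le_self_pow₀ hM (by norm_num))) hX'
        (by rwa [hcard, ← pow_mul, ← pow_succ'])
      rwa [← pow_mul, ← pow_succ'] at this

end Growth

section EnergyAveraging

variable {F : Type*} [Field F] [Fintype F] [DecidableEq F] {A : Finset F} {M : ℝ}

lemma sum_addEnergy_smul_le (A : Finset F) :
    ∑ x : F, E[A, x • A] ≤ #A ^ 4 + Fintype.card F * #A ^ 2 := by
  let sol (x : F) (y : (F × F) × F × F) := y.1.1 + x * y.2.1 = y.1.2 + x * y.2.2
  have hE (x : F) : E[A, x • A] ≤ #{y ∈ (A ×ˢ A) ×ˢ A ×ˢ A | sol x y} := by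
    refine card_le_card_of_surjOn (Prod.map id (Prod.map (x • ·) (x • ·))) ?_
    rintro ⟨⟨a, c⟩, _, _⟩ h
    obtain ⟨⟨hac, h₁, h₂⟩, h⟩ := by simpa only [coe_filter, mem_product, Set.mem_ofPred_eq] using h
    obtain ⟨b, hb, rfl⟩ := mem_smul_finset.1 h₁
    obtain ⟨d, hd, rfl⟩ := mem_smul_finset.1 h₂
    exact ⟨((a, c), b, d), by simpa [sol, hac, hb, hd] using h, rfl⟩
  have hsol (y : (F × F) × F × F) : #{x | sol x y} ≤
      1 + if y.1.1 = y.1.2 ∧ y.2.1 = y.2.2 then Fintype.card F else 0 := by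
    split_ifs with hy
    · exact (card_le_univ _).trans (Nat.le_add_left _ _)
    · rw [add_zero, card_le_one]
      intro x hx x' hx'
      simp only [sol, mem_filter_univ] at hx hx'
      have hprod : (x - x') * (y.2.1 - y.2.2) = 0 := by linear_combination hx - hx'
      refine sub_eq_zero.1 ((mul_eq_zero.1 hprod).resolve_right fun h ↦ hy ?_)
      rw [sub_eq_zero] at h
      exact ⟨by simpa [h] using hx, h⟩
  calc ∑ x : F, E[A, x • A] ≤ ∑ x : F, #{y ∈ (A ×ˢ A) ×ˢ A ×ˢ A | sol x y} :=
        sum_le_sum fun x _ ↦ hE x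
    _ = ∑ y ∈ (A ×ˢ A) ×ˢ A ×ˢ A, #{x | sol x y} :=
        sum_card_bipartiteAbove_eq_sum_card_bipartiteBelow sol
    _ ≤ ∑ y ∈ (A ×ˢ A) ×ˢ A ×ˢ A,
          (1 + if y.1.1 = y.1.2 ∧ y.2.1 = y.2.2 then Fintype.card F else 0) :=
        sum_le_sum fun y _ ↦ hsol y
    _ = #A ^ 4 + Fintype.card F * #A ^ 2 := by
        rw [sum_add_distrib, ← sum_filter, filter_product (fun y : F × F ↦ y.1 = y.2)
          (fun y : F × F ↦ y.1 = y.2), sum_const, sum_const]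
        simp only [← diag_eq_filter, card_product, diag_card, smul_eq_mul]
        ring

theorem card_le_or_card_le_of_forall_almostStabilizes (hA : A.Nonempty)
    (h : ∀ x, AlmostStabilizes A M x) :
    (#A : ℝ) ≤ 4 * M ∨ (Fintype.card F : ℝ) ≤ 4 * M * #A := by
  have hpos : (0 : ℝ) < #A := mod_cast hA.card_pos
  have hM : 0 ≤ M := by
    by_contra! hM
    exact ((h 0).trans_lt (mul_neg_of_neg_of_pos hM hpos)).not_ge (Nat.cast_nonneg _)
  have hq : (2 : ℝ) ≤ Fintype.card F := mod_cast Fintype.one_lt_card (α := F)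
  have henergy (x : F) (hx : x ≠ 0) : (#A : ℝ) ^ 3 ≤ M * E[A, x • A] := by
    have hsum : (#(A + x • A) : ℝ) ≤ M * #A := by
      have := h (-x)
      rwa [AlmostStabilizes, neg_smul_finset, sub_neg_eq_add] at this
    have hcs : (#A ^ 2 * #A ^ 2 : ℝ) ≤ #(A + x • A) * E[A, x • A] := by
      have := le_card_add_mul_addEnergy A (x • A)
      rw [card_smul_finset₀ hx] at this
      exact_mod_cast this
    refine le_of_mul_le_mul_left ?_ hpos
    calc (#A * #A ^ 3 : ℝ) = #A ^ 2 * #A ^ 2 := by ring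
      _ ≤ M * #A * E[A, x • A] := hcs.trans (by gcongr)
      _ = #A * (M * E[A, x • A]) := by ring
  have htotal : (Fintype.card F - 1 : ℝ) * #A ^ 3 ≤ M * (#A ^ 4 + Fintype.card F * #A ^ 2) := by
    calc (Fintype.card F - 1 : ℝ) * #A ^ 3 = ∑ _x ∈ univ.erase (0 : F), (#A : ℝ) ^ 3 := by
          rw [sum_const, card_erase_of_mem (mem_univ _), card_univ, nsmul_eq_mul,
            Nat.cast_pred Fintype.card_pos]
      _ ≤ ∑ x ∈ univ.erase (0 : F), M * (E[A, x • A] : ℝ) :=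
          sum_le_sum fun x hx ↦ henergy x (ne_of_mem_erase hx)
      _ ≤ ∑ x : F, M * (E[A, x • A] : ℝ) :=
          sum_le_sum_of_subset_of_nonneg (subset_univ _) fun _ _ _ ↦ by positivity
      _ ≤ M * (#A ^ 4 + Fintype.card F * #A ^ 2) := by
          rw [← mul_sum]
          gcongr
          exact_mod_cast sum_addEnergy_smul_le A
  have hquad : (Fintype.card F - 1 : ℝ) * #A ≤ M * (#A ^ 2 + Fintype.card F) := by
    refine le_of_mul_le_mul_right ?_ (pow_pos hpos 2)
    linarith
  by_contra! hcon
  nlinarith [mul_lt_mul_of_pos_right hcon.2 hpos,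
    mul_lt_mul_of_pos_right hcon.1 (two_pos.trans_le hq)]

end EnergyAveraging

section PopularIntersections

variable {ι α : Type*} [DecidableEq α] {H : Finset ι} {B : ι → Finset α} {L : Finset α} {a : ℕ}
  {C : ℝ}

lemma sum_sum_card_inter (hB : ∀ h ∈ H, B h ⊆ L) :
    ∑ h ∈ H, ∑ h' ∈ H, #(B h ∩ B h') = ∑ x ∈ L, #{h ∈ H | x ∈ B h} ^ 2 := by
  have hr (x : α) : #{h ∈ H | x ∈ B h} ^ 2 = #{y ∈ H ×ˢ H | x ∈ B y.1 ∩ B y.2} := by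
    simp only [sq, ← card_product, ← filter_product, mem_inter]
  have hinter (y : ι × ι) (hy : y ∈ H ×ˢ H) :
      #(B y.1 ∩ B y.2) = #(bipartiteAbove (fun y x ↦ x ∈ B y.1 ∩ B y.2) L y) := by
    rw [bipartiteAbove, filter_mem_eq_inter,
      inter_eq_right.2 (inter_subset_left.trans (hB _ (mem_product.1 hy).1))]
  rw [← sum_product', sum_congr rfl hinter, sum_card_bipartiteAbove_eq_sum_card_bipartiteBelow]
  exact sum_congr rfl fun x _ ↦ (hr x).symm

lemma exists_card_mul_le_sum_card_inter (hH : H.Nonempty) (ha : 0 < a) (hB : ∀ h ∈ H, B h ⊆ L)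
    (hcard : ∀ h ∈ H, #(B h) = a) (hL : (#L : ℝ) ≤ C * a) :
    ∃ h ∈ H, (#H * a : ℝ) ≤ C * ∑ h' ∈ H, (#(B h ∩ B h') : ℝ) := by
  refine exists_le_of_sum_le hH ?_
  have hr : ∑ x ∈ L, (#{h ∈ H | x ∈ B h} : ℝ) = #H * a := by
    have hfib := sum_card_bipartiteAbove_eq_sum_card_bipartiteBelow (s := H) (t := L)
      fun h x ↦ x ∈ B h
    have hsum : ∑ h ∈ H, #(bipartiteAbove (fun h x ↦ x ∈ B h) L h) = #H * a := by
      refine sum_const_nat fun h hh ↦ ?_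
      rw [bipartiteAbove, filter_mem_eq_inter, inter_eq_right.2 (hB h hh), hcard h hh]
    exact_mod_cast hfib.symm.trans hsum
  have hr2 : ∑ h ∈ H, ∑ h' ∈ H, (#(B h ∩ B h') : ℝ) = ∑ x ∈ L, (#{h ∈ H | x ∈ B h} : ℝ) ^ 2 :=
    mod_cast sum_sum_card_inter hB
  have ha' : (0 : ℝ) < a := mod_cast ha
  rw [sum_const, nsmul_eq_mul, ← mul_sum]
  refine le_of_mul_le_mul_right ?_ ha'
  calc (#H * (#H * a) * a : ℝ) = (∑ x ∈ L, (#{h ∈ H | x ∈ B h} : ℝ)) ^ 2 := by rw [hr]; ring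
    _ ≤ #L * ∑ x ∈ L, (#{h ∈ H | x ∈ B h} : ℝ) ^ 2 := sq_sum_le_card_mul_sum_sq
    _ ≤ C * a * ∑ x ∈ L, (#{h ∈ H | x ∈ B h} : ℝ) ^ 2 := by gcongr
    _ = C * (∑ h ∈ H, ∑ h' ∈ H, (#(B h ∩ B h') : ℝ)) * a := by rw [hr2]; ring

theorem exists_many_popular_inter (hH : H.Nonempty) (ha : 0 < a) (hC : 0 ≤ C)
    (hB : ∀ h ∈ H, B h ⊆ L) (hcard : ∀ h ∈ H, #(B h) = a) (hL : (#L : ℝ) ≤ C * a) :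
    ∃ h ∈ H, (#H : ℝ) ≤ 2 * C * #{h' ∈ H | (a : ℝ) ≤ 2 * C * #(B h ∩ B h')} := by
  obtain ⟨h, hh, hsum⟩ := exists_card_mul_le_sum_card_inter hH ha hB hcard hL
  refine ⟨h, hh, ?_⟩
  have hterm (h' : ι) : 2 * C * #(B h ∩ B h') ≤
      (if (a : ℝ) ≤ 2 * C * #(B h ∩ B h') then 2 * C * a else 0) + a := by
    split_ifs with hpop
    · have hle : (#(B h ∩ B h') : ℝ) ≤ a := by
        rw [← hcard h hh]
        exact_mod_cast card_le_card inter_subset_left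
      have : 2 * C * #(B h ∩ B h') ≤ 2 * C * a := by gcongr
      linarith [(Nat.cast_nonneg a : (0 : ℝ) ≤ a)]
    · linarith
  have hbound := sum_le_sum fun h' (_ : h' ∈ H) ↦ hterm h'
  rw [← mul_sum, sum_add_distrib, ← sum_filter, sum_const, sum_const, nsmul_eq_mul,
    nsmul_eq_mul] at hbound
  have ha' : (0 : ℝ) < a := mod_cast ha
  refine le_of_mul_le_mul_right ?_ ha'
  linarith

end PopularIntersections

section InvariantSets

variable {F : Type*} [Field F] [DecidableEq F] {A : Finset F} {C D : ℝ}

lemma AlmostStabilizes.of_card_le_card_inter (hA : A.Nonempty) {h h' : F} (hh : h ≠ 0)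
    (hh' : h' ≠ 0) (hinter : (#A : ℝ) ≤ C * #(h • A ∩ h' • A))
    (hdiff : (#(A - A) : ℝ) ≤ D * #A) : AlmostStabilizes A (C * D ^ 2) (h⁻¹ * h') := by
  have hpos : (0 : ℝ) < #A := mod_cast hA.card_pos
  have hC : 0 ≤ C := by
    by_contra! hC
    nlinarith [(Nat.cast_nonneg _ : (0 : ℝ) ≤ #(h • A ∩ h' • A))]
  have hsub {x : F} (hx : x ≠ 0) (hB : h • A ∩ h' • A ⊆ x • A) :
      #(x • A - h • A ∩ h' • A) ≤ #(A - A) := by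
    rw [← card_smul_finset₀ hx (A - A), smul_finset_sub]
    exact card_le_card (sub_subset_sub_left hB)
  have htri : #(h • A - h' • A) * #(h • A ∩ h' • A) ≤ #(A - A) * #(A - A) :=
    (ruzsa_triangle_inequality_sub_sub_sub _ _ _).trans <|
      Nat.mul_le_mul (hsub hh inter_subset_left) (hsub hh' inter_subset_right)
  have hdil : #(A - (h⁻¹ * h') • A) = #(h • A - h' • A) := by
    rw [← card_smul_finset₀ hh (A - _), smul_finset_sub, smul_smul, mul_inv_cancel_left₀ hh]
  rw [AlmostStabilizes, hdil]
  refine le_of_mul_le_mul_right ?_ hpos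
  calc (#(h • A - h' • A) * #A : ℝ)
      ≤ #(h • A - h' • A) * (C * #(h • A ∩ h' • A)) := by gcongr
    _ = C * (#(h • A - h' • A) * #(h • A ∩ h' • A)) := by ring
    _ ≤ C * (#(A - A) * #(A - A)) := mul_le_mul_of_nonneg_left (mod_cast htri) hC
    _ ≤ C * (D * #A * (D * #A)) := by gcongr; exact (Nat.cast_nonneg _).trans hdiff
    _ = C * D ^ 2 * #A * #A := by ring

theorem exists_card_almostStabilizes {H L : Finset F} (hA : A.Nonempty) (hAL : A ⊆ L)
    (h₀ : ∀ h ∈ H, h ≠ 0) (hinv : ∀ h ∈ H, h • L ⊆ L) (hL : (#L : ℝ) ≤ C * #A)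
    (hdiff : (#(A - A) : ℝ) ≤ D * #A) :
    ∃ X : Finset F, (#H : ℝ) ≤ 2 * C * #X ∧ ∀ x ∈ X, AlmostStabilizes A (2 * C * D ^ 2) x := by
  rcases H.eq_empty_or_nonempty with rfl | hH
  · exact ⟨∅, by simp⟩
  have hC : 0 ≤ C := by
    have hpos : (0 : ℝ) < #A := mod_cast hA.card_pos
    exact nonneg_of_mul_nonneg_left ((Nat.cast_nonneg _).trans hL) hpos
  obtain ⟨h, hh, hcard⟩ := exists_many_popular_inter (B := (· • A)) hH hA.card_pos hC
    (fun h hh ↦ (smul_finset_subset_smul_finset hAL).trans (hinv h hh))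
    (fun h hh ↦ card_smul_finset₀ (h₀ h hh) A) hL
  refine ⟨h⁻¹ • {h' ∈ H | (#A : ℝ) ≤ 2 * C * #(h • A ∩ h' • A)}, ?_, fun x hx ↦ ?_⟩
  · rwa [card_smul_finset₀ (inv_ne_zero (h₀ h hh))]
  · obtain ⟨h', hh', rfl⟩ := mem_smul_finset.1 hx
    obtain ⟨hh'H, hinter⟩ := mem_filter.1 hh'
    exact .of_card_le_card_inter hA (h₀ h hh) (h₀ h' hh'H) hinter hdiff

end InvariantSets

theorem card_le_of_smul_invariant {p : ℕ} [Fact p.Prime] {H L D : Finset (ZMod p)} {K : ℝ}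
    {n : ℕ} (hK : 4 ≤ K) (hL : L.Nonempty) (h₀ : ∀ h ∈ H, h ≠ 0) (hinv : ∀ h ∈ H, h • L ⊆ L)
    (hpairs : (#L : ℝ) ^ 2 ≤ K * #{x ∈ L ×ˢ L | x.1 - x.2 ∈ D}) (hD : (#D : ℝ) ≤ K * #L)
    (hHL : #H ≤ #L) (hLp : (#L * #H : ℝ) ≤ K * p) (hp : (p : ℝ) ≤ (#H / K ^ 3) ^ 2 ^ n) :
    (#H : ℝ) ≤ K ^ (35 * 693 ^ n + 3) := by
  have hK₁ : 1 ≤ K := by linarith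
  obtain ⟨A, hAL, hA, hLA, hAA⟩ := balog_szemeredi_gowers_sub hK hL hpairs hD
  obtain ⟨X, hHX, hX⟩ := exists_card_almostStabilizes hA hAL h₀ hinv hLA hAA
  have hX35 : ∀ x ∈ X, AlmostStabilizes A (K ^ 35) x := fun x hx ↦ (hX x hx).mono <|
    calc 2 * K ^ 2 * (K ^ 16) ^ 2 = 2 * K ^ 34 := by ring
      _ ≤ K * K ^ 34 := by gcongr; linarith
      _ = K ^ 35 := by ring
  have h₁ : AlmostStabilizes A (K ^ 35) 1 := by
    rw [AlmostStabilizes, one_smul]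
    exact hAA.trans (by gcongr; norm_num)
  have hpX : (p : ℝ) ≤ (#X : ℝ) ^ 2 ^ n := hp.trans <| by
    gcongr
    rw [div_le_iff₀ (by positivity)]
    calc (#H : ℝ) ≤ 2 * K ^ 2 * #X := hHX
      _ ≤ K * K ^ 2 * #X := by gcongr; linarith
      _ = #X * K ^ 3 := by ring
  have hall := AlmostStabilizes.forall_of_le_card_pow hA n (one_le_pow₀ hK₁) h₁ hX35
    (mod_cast hpX)
  rw [← pow_mul] at hall
  have hcombine : 4 * K ^ (35 * 693 ^ n) * K ^ 2 ≤ K ^ (35 * 693 ^ n + 3) := by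
    calc 4 * K ^ (35 * 693 ^ n) * K ^ 2 ≤ K * K ^ (35 * 693 ^ n) * K ^ 2 := by gcongr
      _ = K ^ (35 * 693 ^ n + 3) := by ring
  refine le_trans ?_ hcombine
  rcases card_le_or_card_le_of_forall_almostStabilizes hA hall with hsmall | hlarge
  · calc (#H : ℝ) ≤ #L := mod_cast hHL
      _ ≤ K ^ 2 * #A := hLA
      _ ≤ K ^ 2 * (4 * K ^ (35 * 693 ^ n)) := by gcongr
      _ = 4 * K ^ (35 * 693 ^ n) * K ^ 2 := by ring
  · rw [ZMod.card] at hlarge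
    have hppos : (0 : ℝ) < p := mod_cast (Fact.out : p.Prime).pos
    refine le_of_mul_le_mul_left ?_ hppos
    calc (p * #H : ℝ) ≤ 4 * K ^ (35 * 693 ^ n) * #A * #H := by gcongr
      _ ≤ 4 * K ^ (35 * 693 ^ n) * #L * #H := by gcongr
      _ = 4 * K ^ (35 * 693 ^ n) * (#L * #H) := by ring
      _ ≤ 4 * K ^ (35 * 693 ^ n) * (K * p) := by gcongr
      _ ≤ 4 * K ^ (35 * 693 ^ n) * (K ^ 2 * p) := by gcongr; exact le_self_pow₀ hK₁ two_ne_zero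
      _ = p * (4 * K ^ (35 * 693 ^ n) * K ^ 2) := by ring

section LargeSpectrum

variable {R : Type*} [CommRing R] {ψ : AddChar R ℂ} {H : Finset R} {α β : ℝ}

/-- The exponential sum of a finite set `H` with respect to the additive character `ψ`, that is, the
Fourier transform of the indicator function of `H` at the frequency `a`. -/
noncomputable def expSum (ψ : AddChar R ℂ) (H : Finset R) (a : R) : ℂ :=
  ∑ h ∈ H, ψ (a * h)

lemma norm_expSum_le [Finite R] (a : R) : ‖expSum ψ H a‖ ≤ #H :=
  (norm_sum_le _ _).trans_eq <| by simp only [AddChar.norm_apply, sum_const, nsmul_one]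

lemma sum_norm_sq_sum_mul_addChar [Finite R] (c : R → ℂ) (L : Finset R) :
    ((∑ h ∈ H, ‖∑ a ∈ L, c a * ψ (a * h)‖ ^ 2 : ℝ) : ℂ) =
      ∑ a ∈ L, ∑ b ∈ L, c a * (starRingEnd ℂ) (c b) * expSum ψ H (a - b) := by
  have hexpand (h : R) : ((‖∑ a ∈ L, c a * ψ (a * h)‖ ^ 2 : ℝ) : ℂ) =
      ∑ a ∈ L, ∑ b ∈ L, c a * (starRingEnd ℂ) (c b) * ψ ((a - b) * h) := by
    rw [Complex.ofReal_pow, ← Complex.mul_conj', map_sum, sum_mul_sum]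
    refine sum_congr rfl fun a _ ↦ sum_congr rfl fun b _ ↦ ?_
    rw [map_mul (starRingEnd ℂ), ← AddChar.map_neg_eq_conj, sub_mul, sub_eq_add_neg,
      AddChar.map_add_eq_mul]
    ring
  rw [Complex.ofReal_sum, sum_congr rfl fun h _ ↦ hexpand h, sum_comm]
  refine sum_congr rfl fun a _ ↦ ?_
  rw [sum_comm]
  simp only [expSum, mul_sum]

/-- Duality: the signs making the left side a sum of exponential sums are moved to the side of `H`
by exchanging summations, and removed by Cauchy–Schwarz. -/
lemma sq_sum_norm_expSum_le [Finite R] (H L : Finset R) :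
    (∑ a ∈ L, ‖expSum ψ H a‖) ^ 2 ≤ #H * ∑ a ∈ L, ∑ b ∈ L, ‖expSum ψ H (a - b)‖ := by
  choose θ hθ hθS using fun a ↦ RCLike.exists_norm_eq_mul_self (expSum ψ H a)
  have hswap : ((∑ a ∈ L, ‖expSum ψ H a‖ : ℝ) : ℂ) = ∑ h ∈ H, ∑ a ∈ L, θ a * ψ (a * h) := by
    rw [sum_comm, Complex.ofReal_sum]
    exact sum_congr rfl fun a _ ↦ by rw [← mul_sum]; exact hθS a
  have hle : ∑ a ∈ L, ‖expSum ψ H a‖ ≤ ∑ h ∈ H, ‖∑ a ∈ L, θ a * ψ (a * h)‖ := by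
    refine le_trans (le_of_eq ?_) (norm_sum_le _ _)
    rw [← hswap, Complex.norm_real, Real.norm_of_nonneg (sum_nonneg fun _ _ ↦ norm_nonneg _)]
  calc (∑ a ∈ L, ‖expSum ψ H a‖) ^ 2 ≤ (∑ h ∈ H, ‖∑ a ∈ L, θ a * ψ (a * h)‖) ^ 2 := by gcongr
    _ ≤ #H * ∑ h ∈ H, ‖∑ a ∈ L, θ a * ψ (a * h)‖ ^ 2 := sq_sum_le_card_mul_sum_sq
    _ = #H * ‖((∑ h ∈ H, ‖∑ a ∈ L, θ a * ψ (a * h)‖ ^ 2 : ℝ) : ℂ)‖ := by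
      rw [Complex.norm_real, Real.norm_of_nonneg (sum_nonneg fun _ _ ↦ by positivity)]
    _ ≤ #H * ∑ a ∈ L, ∑ b ∈ L, ‖expSum ψ H (a - b)‖ := by
      rw [sum_norm_sq_sum_mul_addChar]
      gcongr
      refine (norm_sum_le _ _).trans (sum_le_sum fun a _ ↦ ?_)
      refine (norm_sum_le _ _).trans_eq (sum_congr rfl fun b _ ↦ ?_)
      rw [norm_mul, norm_mul, RCLike.norm_conj, hθ, hθ, one_mul, one_mul]

variable [Fintype R]

lemma sum_norm_expSum_sq (hψ : ψ.IsPrimitive) (H : Finset R) :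
    ∑ a, ‖expSum ψ H a‖ ^ 2 = Fintype.card R * #H := by
  classical
  have hexpand := sum_norm_sq_sum_mul_addChar (ψ := ψ) (H := univ) 1 H
  simp only [Pi.one_apply, one_mul, map_one] at hexpand
  have hort (a : R) : expSum ψ univ a = if a = 0 then (Fintype.card R : ℂ) else 0 := by
    simp only [expSum, mul_comm a, AddChar.sum_mulShift a hψ, Nat.cast_ite, Nat.cast_zero]
  simp only [hort, sub_eq_zero, sum_ite_eq, sum_ite_mem, inter_self, sum_const, nsmul_eq_mul]
    at hexpand
  rw [mul_comm (Fintype.card R : ℝ)]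
  simp only [expSum, mul_comm _ (_ : R)] at hexpand ⊢
  exact_mod_cast hexpand

open scoped Classical in
/-- The frequencies at which the exponential sum of `H` is at least the proportion `α` of its
trivial bound `#H`. -/
noncomputable def largeSpectrum (ψ : AddChar R ℂ) (H : Finset R) (α : ℝ) : Finset R :=
  {a | α * #H ≤ ‖expSum ψ H a‖}

lemma mem_largeSpectrum {a : R} : a ∈ largeSpectrum ψ H α ↔ α * #H ≤ ‖expSum ψ H a‖ := by
  rw [largeSpectrum, mem_filter_univ]

lemma largeSpectrum_anti (h : α ≤ β) : largeSpectrum ψ H β ⊆ largeSpectrum ψ H α := by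
  intro a ha
  rw [mem_largeSpectrum] at ha ⊢
  exact le_trans (by gcongr) ha

lemma sq_mul_card_largeSpectrum_sq_le [DecidableEq R] (hH : H.Nonempty) (hα : 0 ≤ α) :
    α ^ 2 * (#(largeSpectrum ψ H α) : ℝ) ^ 2 ≤
      2 * #{x ∈ largeSpectrum ψ H α ×ˢ largeSpectrum ψ H α |
        x.1 - x.2 ∈ largeSpectrum ψ H (α ^ 2 / 2)} := by
  set L := largeSpectrum ψ H α
  set P := {x ∈ L ×ˢ L | x.1 - x.2 ∈ largeSpectrum ψ H (α ^ 2 / 2)} with hP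
  have hpos : (0 : ℝ) < #H := mod_cast hH.card_pos
  have hlower : α * #H * #L ≤ ∑ a ∈ L, ‖expSum ψ H a‖ := by
    rw [mul_comm, ← nsmul_eq_mul]
    exact card_nsmul_le_sum _ _ _ fun a ha ↦ mem_largeSpectrum.1 ha
  have hupper : ∑ a ∈ L, ∑ b ∈ L, ‖expSum ψ H (a - b)‖ ≤
      #H * #P + α ^ 2 / 2 * #H * (#L : ℝ) ^ 2 := by
    have hterm : ∀ x ∈ L ×ˢ L, ‖expSum ψ H (x.1 - x.2)‖ ≤
        (if x.1 - x.2 ∈ largeSpectrum ψ H (α ^ 2 / 2) then (#H : ℝ) else 0) + α ^ 2 / 2 * #H := by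
      intro x _
      split_ifs with hx
      · exact (norm_expSum_le _).trans (le_add_of_nonneg_right (by positivity))
      · rw [mem_largeSpectrum, not_le] at hx
        rw [zero_add]
        exact hx.le
    calc ∑ a ∈ L, ∑ b ∈ L, ‖expSum ψ H (a - b)‖
        = ∑ x ∈ L ×ˢ L, ‖expSum ψ H (x.1 - x.2)‖ :=
        (sum_product' L L fun a b ↦ ‖expSum ψ H (a - b)‖).symm
      _ ≤ _ := sum_le_sum hterm
      _ = #H * #P + α ^ 2 / 2 * #H * (#L : ℝ) ^ 2 := by
        rw [sum_add_distrib, ← sum_filter, ← hP, sum_const, sum_const, card_product,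
          nsmul_eq_mul, nsmul_eq_mul]
        push_cast
        ring
  have hsq : (α * #H * #L) ^ 2 ≤ #H * (#H * #P + α ^ 2 / 2 * #H * (#L : ℝ) ^ 2) :=
    calc (α * #H * #L) ^ 2 ≤ (∑ a ∈ L, ‖expSum ψ H a‖) ^ 2 := by gcongr
      _ ≤ #H * ∑ a ∈ L, ∑ b ∈ L, ‖expSum ψ H (a - b)‖ := sq_sum_norm_expSum_le H L
      _ ≤ _ := by gcongr
  refine le_of_mul_le_mul_left ?_ (pow_pos hpos 2)
  linarith

lemma card_largeSpectrum_mul_le (hψ : ψ.IsPrimitive) (hα : 0 ≤ α) :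
    (#(largeSpectrum ψ H α) * #H * α ^ 2 : ℝ) ≤ Fintype.card R := by
  rcases H.eq_empty_or_nonempty with rfl | hH
  · simp
  have hpos : (0 : ℝ) < #H := mod_cast hH.card_pos
  refine le_of_mul_le_mul_right ?_ hpos
  calc (#(largeSpectrum ψ H α) * #H * α ^ 2 * #H : ℝ)
      = #(largeSpectrum ψ H α) • (α * #H) ^ 2 := by rw [nsmul_eq_mul]; ring
    _ ≤ ∑ a ∈ largeSpectrum ψ H α, ‖expSum ψ H a‖ ^ 2 := card_nsmul_le_sum _ _ _ fun a ha ↦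
        pow_le_pow_left₀ (by positivity) (mem_largeSpectrum.1 ha) 2
    _ ≤ ∑ a, ‖expSum ψ H a‖ ^ 2 := sum_le_univ_sum_of_nonneg fun _ ↦ by positivity
    _ = Fintype.card R * #H := sum_norm_expSum_sq hψ H

end LargeSpectrum

section BourgainGlibichukKonyagin

section InvariantSpectrum

variable {F : Type*} [Field F] [DecidableEq F] {ψ : AddChar F ℂ} {H : Finset F}
  {α : ℝ}

lemma expSum_mul_of_smul_eq {h : F} (hh : h ≠ 0) (hH : h • H = H) (a : F) :
    expSum ψ H (h * a) = expSum ψ H a := by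
  rw [expSum, expSum]
  conv_rhs => rw [← hH, ← image_smul, sum_image (smul_right_injective F hh).injOn]
  simp only [smul_eq_mul, mul_left_comm, mul_assoc]

variable [Fintype F]

lemma smul_largeSpectrum_subset {h : F} (hh : h ≠ 0) (hH : h • H = H) :
    h • largeSpectrum ψ H α ⊆ largeSpectrum ψ H α := by
  intro _ hx
  obtain ⟨a, ha, rfl⟩ := mem_smul_finset.1 hx
  rw [mem_largeSpectrum] at ha ⊢
  rwa [smul_eq_mul, expSum_mul_of_smul_eq hh hH]

lemma card_le_card_largeSpectrum (h₀ : ∀ h ∈ H, h ≠ 0) (hmul : ∀ h ∈ H, h • H = H) {a : F}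
    (ha : a ≠ 0) (haL : a ∈ largeSpectrum ψ H α) : #H ≤ #(largeSpectrum ψ H α) := by
  rw [← card_smul_finset₀ ha H]
  refine card_le_card fun _ hx ↦ ?_
  obtain ⟨h, hh, rfl⟩ := mem_smul_finset.1 hx
  rw [smul_eq_mul, mul_comm, ← smul_eq_mul]
  exact smul_largeSpectrum_subset (h₀ h hh) (hmul h hh) (smul_mem_smul_finset haL)

end InvariantSpectrum

variable {p : ℕ} [Fact p.Prime] {ψ : AddChar (ZMod p) ℂ} {H : Finset (ZMod p)}

lemma card_le_of_card_largeSpectrum_le {K α β : ℝ} {n : ℕ} (hψ : ψ.IsPrimitive)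
    (h₀ : ∀ h ∈ H, h ≠ 0) (hmul : ∀ h ∈ H, h • H = H) (hK : 4 ≤ K) (hα : 0 ≤ α)
    (hαβ : β ≤ α ^ 2 / 2) (hβ : 1 ≤ K * β) (hne : ∃ a ≠ 0, a ∈ largeSpectrum ψ H α)
    (hcard : (#(largeSpectrum ψ H β) : ℝ) ≤ K * #(largeSpectrum ψ H α))
    (hp : (p : ℝ) ≤ (#H / K ^ 3) ^ 2 ^ n) : (#H : ℝ) ≤ K ^ (35 * 693 ^ n + 3) := by
  rcases H.eq_empty_or_nonempty with rfl | hH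
  · rw [card_empty, Nat.cast_zero]
    positivity
  obtain ⟨a, ha, haL⟩ := hne
  have hKα : 2 ≤ K * α ^ 2 := by nlinarith
  refine card_le_of_smul_invariant hK ⟨a, haL⟩ h₀
    (fun h hh ↦ smul_largeSpectrum_subset (h₀ h hh) (hmul h hh)) ?_ hcard
    (card_le_card_largeSpectrum h₀ hmul ha haL) ?_ hp
  · set L := largeSpectrum ψ H α with hL
    have hmono : (#{x ∈ L ×ˢ L | x.1 - x.2 ∈ largeSpectrum ψ H (α ^ 2 / 2)} : ℝ) ≤
        #{x ∈ L ×ˢ L | x.1 - x.2 ∈ largeSpectrum ψ H β} := by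
      exact_mod_cast card_le_card <| monotone_filter_right _ fun _ _ h ↦
        largeSpectrum_anti hαβ h
    have hpairs := sq_mul_card_largeSpectrum_sq_le (ψ := ψ) hH hα
    rw [← hL] at hpairs
    have : 2 * (#L : ℝ) ^ 2 ≤ K * α ^ 2 * (#L : ℝ) ^ 2 := by gcongr
    nlinarith
  · have hmul_le := card_largeSpectrum_mul_le (H := H) hψ hα
    rw [ZMod.card] at hmul_le
    calc (#(largeSpectrum ψ H α) * #H : ℝ)
        ≤ #(largeSpectrum ψ H α) * #H * (K * α ^ 2) :=
          le_mul_of_one_le_right (by positivity) (by linarith)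
      _ = K * (#(largeSpectrum ψ H α) * #H * α ^ 2) := by ring
      _ ≤ K * p := by gcongr

/-- If the bound fails, then the frequency `a` lies in the spectrum at each of the levels
`x ^ (-3 ^ j)`. By pigeonhole two consecutive spectra have comparable cardinality, and differences
of the first tend to lie in the second. -/
lemma norm_expSum_le_card_div {x : ℝ} {n J : ℕ} (hψ : ψ.IsPrimitive) (h₀ : ∀ h ∈ H, h ≠ 0)
    (hmul : ∀ h ∈ H, h • H = H) (hx : 2 ≤ x) (hJ : 0 < J) (hpJ : (p : ℝ) ≤ (x ^ 3 ^ J) ^ J)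
    (hp : (p : ℝ) ≤ (#H / (x ^ 3 ^ J) ^ 3) ^ 2 ^ n)
    (hcard : (x ^ 3 ^ J) ^ (35 * 693 ^ n + 3) < #H) {a : ZMod p} (ha : a ≠ 0) :
    ‖expSum ψ H a‖ ≤ #H / x := by
  by_contra! hlarge
  have hx₁ : 1 ≤ x := by linarith
  set K := x ^ 3 ^ J with hK
  let α (j : ℕ) : ℝ := (x ^ 3 ^ j)⁻¹
  have haα (j : ℕ) : a ∈ largeSpectrum ψ H (α j) := by
    rw [mem_largeSpectrum]
    refine le_trans ?_ hlarge.le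
    rw [div_eq_inv_mul]
    gcongr
    exact inv_anti₀ (by positivity) (le_self_pow₀ hx₁ (by positivity))
  have hK₄ : 4 ≤ K := by
    calc (4 : ℝ) ≤ 2 ^ 3 := by norm_num
      _ ≤ x ^ 3 := by gcongr
      _ ≤ K := pow_le_pow_right₀ hx₁ (le_self_pow₀ (by norm_num) hJ.ne')
  obtain ⟨j, hjJ, hj⟩ : ∃ j < J,
      (#(largeSpectrum ψ H (α (j + 1))) : ℝ) ≤ K * #(largeSpectrum ψ H (α j)) := by
    by_contra! hgrow
    have hlt := geom_lt (u := fun j ↦ (#(largeSpectrum ψ H (α j)) : ℝ)) (by linarith) hJ hgrow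
    have hone : (1 : ℝ) ≤ #(largeSpectrum ψ H (α 0)) := mod_cast card_pos.2 ⟨a, haα 0⟩
    have hle : (#(largeSpectrum ψ H (α J)) : ℝ) ≤ p := by
      exact_mod_cast (card_le_univ _).trans_eq (ZMod.card p)
    nlinarith [pow_pos (by linarith : 0 < K) J]
  refine hcard.not_ge <| card_le_of_card_largeSpectrum_le hψ h₀ hmul hK₄ (by positivity) ?_ ?_
    ⟨a, ha, haα j⟩ hj hp
  · have hxj : (x ^ 3 ^ j) ^ 2 * 2 ≤ x ^ 3 ^ (j + 1) := by
      calc (x ^ 3 ^ j) ^ 2 * 2 ≤ (x ^ 3 ^ j) ^ 2 * x ^ 3 ^ j := by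
            gcongr
            exact hx.trans (le_self_pow₀ hx₁ (by positivity))
        _ = x ^ 3 ^ (j + 1) := by rw [← pow_succ, ← pow_mul, ← pow_succ]
    rw [inv_pow, div_eq_mul_inv, ← mul_inv]
    exact inv_anti₀ (by positivity) hxj
  · rw [← div_eq_mul_inv, one_le_div (by positivity)]
    exact pow_le_pow_right₀ hx₁ (Nat.pow_le_pow_right (by norm_num) hjJ)

lemma norm_expSum_le_mul_rpow {ε κ : ℝ} {n J : ℕ} (hψ : ψ.IsPrimitive) (h₀ : ∀ h ∈ H, h ≠ 0)
    (hmul : ∀ h ∈ H, h • H = H) (hκ : 0 < κ) (hJ : 1 ≤ κ * J) (hn : 2 ≤ ε * 2 ^ n)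
    (hκε : κ * (35 * 693 ^ n + 3 : ℕ) + 6 * κ ≤ ε) (hH : (p : ℝ) ^ ε ≤ #H) {a : ZMod p}
    (ha : a ≠ 0) : ‖expSum ψ H a‖ ≤ 2 * #H * (p : ℝ) ^ (-(κ / 3 ^ J)) := by
  have hp₁ : (1 : ℝ) < p := mod_cast (Fact.out : p.Prime).one_lt
  have hp₀ : (0 : ℝ) < p := by linarith
  set x := (p : ℝ) ^ (κ / 3 ^ J) with hx
  have hx₀ : 0 < x := by positivity
  rw [Real.rpow_neg hp₀.le, ← hx, ← div_eq_mul_inv]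
  rcases lt_or_ge x 2 with hx₂ | hx₂
  · refine (norm_expSum_le a).trans ?_
    rw [le_div_iff₀ hx₀, mul_comm]
    gcongr
  have hpow (y : ℝ) (k : ℕ) : ((p : ℝ) ^ y) ^ k = (p : ℝ) ^ (y * k) :=
    (Real.rpow_mul_natCast hp₀.le y k).symm
  have hK : x ^ 3 ^ J = (p : ℝ) ^ κ := by
    rw [hx, hpow, Nat.cast_pow, Nat.cast_ofNat, div_mul_cancel₀ _ (by positivity)]
  have hroot : (p : ℝ) ^ (ε / 2) ≤ #H / (x ^ 3 ^ J) ^ 3 := by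
    rw [le_div_iff₀ (by positivity), hK, hpow, ← Real.rpow_add hp₀]
    refine le_trans (Real.rpow_le_rpow_of_exponent_le hp₁.le ?_) hH
    have : 0 ≤ κ * (35 * 693 ^ n + 3 : ℕ) := by positivity
    push_cast at this hκε ⊢
    linarith
  have hJpos : 0 < J := Nat.pos_of_ne_zero fun h ↦ by norm_num [h] at hJ
  refine (norm_expSum_le_card_div hψ h₀ hmul hx₂ hJpos (n := n) ?_ ?_ ?_ ha).trans ?_
  · rw [hK, hpow]
    exact Real.self_le_rpow_of_one_le hp₁.le hJ
  · refine le_trans ?_ (pow_le_pow_left₀ (by positivity) hroot _)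
    rw [hpow]
    refine Real.self_le_rpow_of_one_le hp₁.le ?_
    push_cast
    linarith
  · rw [hK, hpow]
    exact (Real.rpow_lt_rpow_of_exponent_lt hp₁ (by linarith)).trans_le hH
  · gcongr
    linarith [(Nat.cast_nonneg #H : (0 : ℝ) ≤ #H)]

theorem exists_norm_expSum_le_of_smul_eq (ε : ℝ) (hε : 0 < ε) :
    ∃ δ > (0 : ℝ), ∀ (p : ℕ) [Fact p.Prime] (ψ : AddChar (ZMod p) ℂ) (H : Finset (ZMod p)),
      ψ.IsPrimitive → (∀ h ∈ H, h ≠ 0) → (∀ h ∈ H, h • H = H) → (p : ℝ) ^ ε ≤ #H →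
        ∀ a ≠ 0, ‖expSum ψ H a‖ ≤ 2 * #H * (p : ℝ) ^ (-δ) := by
  obtain ⟨n, hn⟩ : ∃ n : ℕ, 2 / ε < 2 ^ n := pow_unbounded_of_one_lt _ one_lt_two
  let κ := ε / ((35 * 693 ^ n + 3 : ℕ) + 6)
  have hκ : 0 < κ := by positivity
  have hκε : κ * (35 * 693 ^ n + 3 : ℕ) + 6 * κ ≤ ε := by
    rw [mul_comm 6, ← mul_add, div_mul_cancel₀ _ (by positivity)]
  obtain ⟨J, hJ⟩ : ∃ J : ℕ, 1 / κ ≤ J := exists_nat_ge _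
  exact ⟨κ / 3 ^ J, by positivity, fun p _ ψ H hψ h₀ hmul hH a ha ↦
    norm_expSum_le_mul_rpow hψ h₀ hmul hκ ((div_le_iff₀' hκ).1 hJ)
      ((div_le_iff₀' hε).1 hn.le) hκε hH ha⟩

/-- The **Bourgain–Glibichuk–Konyagin theorem**. -/
theorem exists_norm_sum_subgroup_le (ε : ℝ) (hε : 0 < ε) :
    ∃ δ > (0 : ℝ), ∀ (p : ℕ) [Fact p.Prime] (ψ : AddChar (ZMod p) ℂ) (H : Subgroup (ZMod p)ˣ)
      [Fintype H], ψ.IsPrimitive → (p : ℝ) ^ ε ≤ Fintype.card H →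
        ∀ a ≠ 0, ‖∑ h : H, ψ (a * ((h : (ZMod p)ˣ) : ZMod p))‖ ≤
          2 * Fintype.card H * (p : ℝ) ^ (-δ) := by
  obtain ⟨δ, hδ, hbound⟩ := exists_norm_expSum_le_of_smul_eq ε hε
  refine ⟨δ, hδ, fun p _ ψ H _ hψ hH a ha ↦ ?_⟩
  let ι : H ↪ ZMod p := (Function.Embedding.subtype _).trans ⟨Units.val, Units.val_injective⟩
  have hcard : #(univ.map ι) = Fintype.card H := card_map _
  have hsmul : ∀ x ∈ univ.map ι, x • univ.map ι = univ.map ι := by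
    simp only [mem_map, mem_univ, true_and, forall_exists_index, forall_apply_eq_imp_iff]
    refine fun h ↦ eq_of_subset_of_card_le (fun _ hx ↦ ?_) ?_
    · obtain ⟨_, hy, rfl⟩ := mem_smul_finset.1 hx
      obtain ⟨h', -, rfl⟩ := mem_map.1 hy
      exact mem_map.2 ⟨h * h', mem_univ _, by simp [ι]⟩
    · exact (card_smul_finset₀ (Units.ne_zero _) _).ge
  have h₀ : ∀ x ∈ univ.map ι, x ≠ 0 := by simp [ι]
  have hle := hbound p ψ (univ.map ι) hψ h₀ hsmul (by rwa [hcard]) a ha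
  rwa [hcard, expSum, sum_map] at hle

end BourgainGlibichukKonyagin

section LineCounting

variable {F : Type*} [Field F] [Fintype F] [DecidableEq F] {m : ℕ}

theorem card_le_mul_card_pow_of_card_line_le (E : Finset (Fin (m + 1) → F)) (j : Fin (m + 1))
    (D : ℕ) (h : ∀ v, #{s | Function.update v j s ∈ E} ≤ D) :
    #E ≤ D * Fintype.card F ^ m := by
  have hfiber : ∀ w ∈ (univ : Finset (Fin m → F)), #{v ∈ E | j.removeNth v = w} ≤ D := by
    intro w _
    refine (card_le_card_of_injOn (fun v ↦ v j) ?_ ?_).trans (h (j.insertNth 0 w))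
    · intro v hv
      obtain ⟨hvE, rfl⟩ := mem_filter.1 hv
      simpa only [coe_filter, mem_univ, true_and, Set.mem_ofPred_eq, Fin.update_insertNth,
        Fin.insertNth_self_removeNth] using hvE
    · intro v hv v' hv' hvv'
      rw [← Fin.insertNth_self_removeNth j v, ← Fin.insertNth_self_removeNth j v',
        (mem_filter.1 hv).2, (mem_filter.1 hv').2]
      exact congrArg (fun x ↦ j.insertNth (α := fun _ ↦ F) x w) hvv'
  simpa only [card_univ, Fintype.card_fun, Fintype.card_fin] using
    card_le_mul_card_image_of_maps_to (s := E) (fun v _ ↦ mem_univ (j.removeNth v)) D hfiber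

theorem card_zeros_le_of_polynomial_on_lines (j : Fin (m + 1)) (D : ℕ)
    (good : (Fin (m + 1) → F) → Prop) [DecidablePred good]
    (hgood : ∀ v s, good (Function.update v j s) → good v) (f : (Fin (m + 1) → F) → F)
    (hf : ∀ v, good v → ∃ Q : Polynomial F, Q ≠ 0 ∧ Q.natDegree ≤ D ∧
      ∀ s, Q.eval s = f (Function.update v j s)) :
    #{v | good v ∧ f v = 0} ≤ D * Fintype.card F ^ m := by
  refine card_le_mul_card_pow_of_card_line_le _ j D fun v ↦ ?_
  simp only [mem_filter_univ]
  by_cases hv : good v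
  · obtain ⟨Q, hQ, hdeg, heval⟩ := hf v hv
    have hroots : ({s | good (Function.update v j s) ∧ f (Function.update v j s) = 0} :
        Finset F) ⊆ Q.roots.toFinset := fun s hs ↦ by
      rw [Multiset.mem_toFinset, Polynomial.mem_roots hQ, Polynomial.IsRoot, heval]
      exact ((mem_filter_univ s).1 hs).2
    exact (card_le_card hroots).trans
      ((Multiset.toFinset_card_le _).trans (Q.card_roots'.trans hdeg))
  · rw [filter_eq_empty_iff.2 fun s _ hs ↦ hv (hgood v s hs.1), card_empty]
    exact D.zero_le

end LineCounting

section ProductSums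

variable {F : Type*} [Field F] {R : ℕ → Polynomial F} {σ K : ℕ}

theorem natDegree_prod_range_of_natDegree_eq (hσ : σ ≠ 0) (hR : ∀ l < K, (R l).natDegree = σ) :
    (∏ l ∈ range K, R l).natDegree = K * σ := by
  rw [Polynomial.natDegree_prod, sum_congr rfl fun l hl ↦ hR l (mem_range.1 hl)]
  · rw [sum_const, card_range, smul_eq_mul]
  · intro l hl h0
    rw [← hR l (mem_range.1 hl), h0] at hσ
    exact hσ Polynomial.natDegree_zero

theorem natDegree_sum_C_mul_prod_range_le (hσ : σ ≠ 0) (hR : ∀ l < K, (R l).natDegree = σ)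
    (c : ℕ → F) :
    (∑ k ∈ range K, Polynomial.C (c k) * ∏ l ∈ range k, R l).natDegree ≤ K * σ := by
  refine Polynomial.natDegree_sum_le_of_forall_le _ _ fun k hk ↦ ?_
  refine (Polynomial.natDegree_C_mul_le _ _).trans ?_
  have hkK := mem_range.1 hk
  rw [natDegree_prod_range_of_natDegree_eq hσ fun l hl ↦ hR l (hl.trans hkK)]
  exact Nat.mul_le_mul_right _ hkK.le

-- The summands have distinct degrees `k * σ`, so the last nonzero one is not cancelled.
theorem sum_C_mul_prod_range_ne_zero (hσ : σ ≠ 0) (hR : ∀ l < K, (R l).natDegree = σ)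
    {c : ℕ → F} (hc : ∃ k < K, c k ≠ 0) :
    ∑ k ∈ range K, Polynomial.C (c k) * ∏ l ∈ range k, R l ≠ 0 := by
  have hdeg : ∀ k < K, (∏ l ∈ range k, R l).natDegree = k * σ := fun k hk ↦
    natDegree_prod_range_of_natDegree_eq hσ fun l hl ↦ hR l (hl.trans hk)
  have hprod : ∀ k < K, ∏ l ∈ range k, R l ≠ 0 := fun k hk ↦
    prod_ne_zero_iff.2 fun l hl h0 ↦ hσ <| by
      rw [← hR l ((mem_range.1 hl).trans hk), h0, Polynomial.natDegree_zero]
  obtain ⟨k₁, hk₁, hck₁⟩ := hc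
  classical
  obtain ⟨k, hk, hmax⟩ := exists_max_image {k ∈ range K | c k ≠ 0} id
    ⟨k₁, mem_filter.2 ⟨mem_range.2 hk₁, hck₁⟩⟩
  obtain ⟨hkK, hck⟩ := mem_filter.1 hk
  intro hsum
  have hcoeff := congrArg (Polynomial.coeff · (k * σ)) hsum
  simp only [Polynomial.finsetSum_coeff, Polynomial.coeff_C_mul, Polynomial.coeff_zero] at hcoeff
  rw [sum_eq_single_of_mem k hkK, ← hdeg k (mem_range.1 hkK), Polynomial.coeff_natDegree] at hcoeff
  · exact mul_ne_zero hck (Polynomial.leadingCoeff_ne_zero.2 (hprod k (mem_range.1 hkK))) hcoeff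
  · intro k' hk' hne
    rcases hne.lt_or_gt with hlt | hgt
    · rw [Polynomial.coeff_eq_zero_of_natDegree_lt, mul_zero]
      rw [hdeg k' (mem_range.1 hk')]
      exact Nat.mul_lt_mul_of_pos_right hlt (Nat.pos_of_ne_zero hσ)
    · have hck' : c k' = 0 := by
        by_contra hck'
        exact hgt.not_ge (hmax k' (mem_filter.2 ⟨hk', hck'⟩))
      rw [hck', zero_mul]

end ProductSums

section TriangularMaps

/-- Maps `Φ` of `R^n` of the triangular form `Φ(v)_i = v_i G_i(v) + H_i(v)`, where `G_i` and `H_i`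
depend only on the coordinates of index greater than `i`. -/
structure IsTriangular {R : Type*} [CommRing R] {n : ℕ} (Φ : (Fin n → R) → Fin n → R)
    (G H : Fin n → (Fin n → R) → R) : Prop where
  apply_eq : ∀ v i, Φ v i = v i * G i v + H i v
  slope_congr : ∀ i v v', (∀ j, i < j → v j = v' j) → G i v = G i v'
  const_congr : ∀ i v v', (∀ j, i < j → v j = v' j) → H i v = H i v'

/-- The factor `G_i(v) G_i(Φ v) ⋯ G_i(Φ^{k-1} v)` by which `v_i` enters the `i`-th coordinate of
`Φ^k(v)`. -/
def multiplier {R : Type*} [CommRing R] {n : ℕ} (Φ : (Fin n → R) → Fin n → R)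
    (G : Fin n → (Fin n → R) → R) (k : ℕ) (i : Fin n) (v : Fin n → R) : R :=
  ∏ l ∈ range k, G i (Φ^[l] v)

namespace IsTriangular

variable {R : Type*} [CommRing R] {n : ℕ} {Φ : (Fin n → R) → Fin n → R}
  {G H : Fin n → (Fin n → R) → R}

theorem iterate_congr (T : IsTriangular Φ G H) {i : Fin n} {v v' : Fin n → R}
    (h : ∀ j, i < j → v j = v' j) (k : ℕ) : ∀ j, i < j → Φ^[k] v j = Φ^[k] v' j := by
  induction k with
  | zero => exact h
  | succ k ih =>
    intro j hj
    have hlater : ∀ l, j < l → Φ^[k] v l = Φ^[k] v' l := fun l hl ↦ ih l (hj.trans hl)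
    rw [Function.iterate_succ_apply', Function.iterate_succ_apply', T.apply_eq, T.apply_eq,
      ih j hj, T.slope_congr j _ _ hlater, T.const_congr j _ _ hlater]

theorem iterate_update_of_lt (T : IsTriangular Φ G H) (k : ℕ) {i j : Fin n} (hij : i < j)
    (v : Fin n → R) (s : R) : Φ^[k] (Function.update v i s) j = Φ^[k] v j :=
  T.iterate_congr (fun _ hl ↦ Function.update_of_ne hl.ne' _ _) k j hij

theorem multiplier_update (T : IsTriangular Φ G H) (k : ℕ) (i : Fin n) (v : Fin n → R) (s : R) :
    multiplier Φ G k i (Function.update v i s) = multiplier Φ G k i v :=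
  prod_congr rfl fun l _ ↦ T.slope_congr i _ _ fun _ hj ↦ T.iterate_update_of_lt l hj v s

theorem iterate_update_self (T : IsTriangular Φ G H) (k : ℕ) (i : Fin n) (v : Fin n → R) (s : R) :
    Φ^[k] (Function.update v i s) i = Φ^[k] v i + multiplier Φ G k i v * (s - v i) := by
  induction k with
  | zero => simp [multiplier]
  | succ k ih =>
    have hlater : ∀ j, i < j → Φ^[k] (Function.update v i s) j = Φ^[k] v j :=
      fun j hj ↦ T.iterate_update_of_lt k hj v s
    rw [Function.iterate_succ_apply', Function.iterate_succ_apply', T.apply_eq, T.apply_eq, ih,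
      T.slope_congr i _ _ hlater, T.const_congr i _ _ hlater, multiplier, multiplier,
      prod_range_succ]
    ring

theorem dotProduct_iterate_add_single (T : IsTriangular Φ G H) {b : Fin n → R} {i : Fin n}
    (hb : ∀ j < i, b j = 0) (k : ℕ) (v : Fin n → R) (s : R) :
    dotProduct b (Φ^[k] (v + Pi.single i s)) =
      dotProduct b (Φ^[k] v) + b i * multiplier Φ G k i v * s := by
  have hupdate : v + Pi.single i s = Function.update v i (v i + s) := by
    ext j
    rcases eq_or_ne j i with rfl | hj <;> simp [*]
  have hrest : ∀ j ∈ univ.erase i, b j * Φ^[k] (Function.update v i (v i + s)) j =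
      b j * Φ^[k] v j := fun j hj ↦ by
    rcases (ne_of_mem_erase hj).lt_or_gt with hlt | hgt
    · rw [hb j hlt, zero_mul, zero_mul]
    · rw [T.iterate_update_of_lt k hgt]
  rw [hupdate, dotProduct, dotProduct, ← add_sum_erase _ _ (mem_univ i),
    ← add_sum_erase _ _ (mem_univ i), sum_congr rfl hrest, T.iterate_update_self]
  ring

end IsTriangular

end TriangularMaps

section TriangularSystems

/-- A triangular map of `F^{m+1}` with the two features of a system of degree at most `d` in
`𝔉(S,m)` on which the argument rests: `G_m` does not vanish, and `G_i` is, for nonzero later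
coordinates, a polynomial in its first variable whose positive degree does not depend on them. -/
structure IsTriangularSystem {F : Type*} [Field F] {m : ℕ} (d : ℕ)
    (Φ : (Fin (m + 1) → F) → Fin (m + 1) → F) (G H : Fin (m + 1) → (Fin (m + 1) → F) → F) : Prop
    extends IsTriangular Φ G H where
  slope_last_ne_zero : ∀ v, G (Fin.last m) v ≠ 0
  exists_polynomial : ∀ i : Fin m, ∃ σ ≠ 0, σ ≤ d ∧ ∀ v, (∀ j, i.succ < j → v j ≠ 0) →
    ∃ Q : Polynomial F, Q.natDegree = σ ∧
      ∀ t, Q.eval t = G i.castSucc (Function.update v i.succ t)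

/-- The condition on `v` under which `Φ^l`, restricted to the line through `v` in direction `i`,
is a bijective affine map in coordinate `i` and has constant nonzero later coordinates. -/
abbrev NonvanishingAbove {R : Type*} [CommRing R] {n : ℕ} (Φ : (Fin n → R) → Fin n → R)
    (G : Fin n → (Fin n → R) → R) (l : ℕ) (i : Fin n) (v : Fin n → R) : Prop :=
  multiplier Φ G l i v ≠ 0 ∧ ∀ j, i < j → Φ^[l] v j ≠ 0

theorem IsTriangular.nonvanishingAbove_update {R : Type*} [CommRing R] {n : ℕ}
    {Φ : (Fin n → R) → Fin n → R} {G H : Fin n → (Fin n → R) → R} (T : IsTriangular Φ G H)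
    (l : ℕ) (i : Fin n) (v : Fin n → R) (s : R) :
    NonvanishingAbove Φ G l i (Function.update v i s) ↔ NonvanishingAbove Φ G l i v :=
  and_congr (by rw [T.multiplier_update]) <| forall₂_congr fun j hj ↦ by
    rw [T.iterate_update_of_lt l hj]

namespace IsTriangularSystem

variable {F : Type*} [Field F] {m d : ℕ} {Φ : (Fin (m + 1) → F) → Fin (m + 1) → F}
  {G H : Fin (m + 1) → (Fin (m + 1) → F) → F}

theorem exists_polynomial_iterate (T : IsTriangularSystem d Φ G H) (i : Fin m) :
    ∃ σ ≠ 0, σ ≤ d ∧ ∀ v l, NonvanishingAbove Φ G l i.succ v →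
      ∃ Q : Polynomial F, Q.natDegree = σ ∧
        ∀ s, Q.eval s = G i.castSucc (Φ^[l] (Function.update v i.succ s)) := by
  obtain ⟨σ, hσ, hσd, hpoly⟩ := T.exists_polynomial i
  refine ⟨σ, hσ, hσd, fun v l hv ↦ ?_⟩
  obtain ⟨Q, hdeg, heval⟩ := hpoly (Φ^[l] v) hv.2
  set a := multiplier Φ G l i.succ v
  refine ⟨Q.comp (Polynomial.C a * Polynomial.X +
    Polynomial.C (Φ^[l] v i.succ - a * v i.succ)), ?_, fun s ↦ ?_⟩
  · rw [Polynomial.natDegree_comp, Polynomial.natDegree_linear hv.1, hdeg, mul_one]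
  · rw [Polynomial.eval_comp, Polynomial.eval_add, Polynomial.eval_mul, Polynomial.eval_C,
      Polynomial.eval_C, Polynomial.eval_X, heval]
    refine T.slope_congr _ _ _ fun j hj ↦ ?_
    rcases (Fin.castSucc_lt_iff_succ_le.1 hj).eq_or_lt with rfl | hlt
    · rw [Function.update_self, T.iterate_update_self]
      ring
    · rw [Function.update_of_ne hlt.ne', T.iterate_update_of_lt l hlt]

theorem nonvanishingAbove_of_lt (T : IsTriangularSystem d Φ G H) {K : ℕ}
    {v : Fin (m + 1) → F}
    (hcoord : ∀ i, ∀ l < K, NonvanishingAbove Φ G l i v → Φ^[l] v i ≠ 0)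
    (hslope : ∀ i : Fin m, ∀ l < K, NonvanishingAbove Φ G l i.succ v →
      G i.castSucc (Φ^[l] v) ≠ 0) (i : Fin (m + 1)) :
    ∀ l < K, NonvanishingAbove Φ G l i v := by
  have hmul : ∀ i, (∀ l < K, G i (Φ^[l] v) ≠ 0) → ∀ l < K, multiplier Φ G l i v ≠ 0 :=
    fun i hG l hl ↦ prod_ne_zero_iff.2 fun l' hl' ↦ hG l' ((mem_range.1 hl').trans hl)
  induction i using Fin.reverseInduction with
  | last => exact fun l hl ↦ ⟨hmul _ (fun l _ ↦ T.slope_last_ne_zero _) l hl,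
      fun j hj ↦ absurd hj (Fin.le_last j).not_gt⟩
  | cast i ih =>
    refine fun l hl ↦ ⟨hmul _ (fun l hl ↦ hslope i l hl (ih l hl)) l hl, fun j hj ↦ ?_⟩
    rcases (Fin.castSucc_lt_iff_succ_le.1 hj).eq_or_lt with rfl | hlt
    · exact hcoord _ l hl (ih l hl)
    · exact (ih l hl).2 j hlt

variable [Fintype F] [DecidableEq F]

theorem card_iterate_eq_zero_le (T : IsTriangularSystem d Φ G H) (i : Fin (m + 1)) (l : ℕ) :
    #{v | NonvanishingAbove Φ G l i v ∧ Φ^[l] v i = 0} ≤ Fintype.card F ^ m := by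
  refine (card_zeros_le_of_polynomial_on_lines i 1 _
    (fun v s ↦ (T.nonvanishingAbove_update l i v s).1) (fun v ↦ Φ^[l] v i) ?_).trans_eq (one_mul _)
  intro v hv
  refine ⟨Polynomial.C (multiplier Φ G l i v) * Polynomial.X +
    Polynomial.C (Φ^[l] v i - multiplier Φ G l i v * v i), fun h0 ↦ ?_,
    Polynomial.natDegree_linear_le, fun s ↦ ?_⟩
  · simpa only [h0, Polynomial.natDegree_zero, zero_ne_one] using
      Polynomial.natDegree_linear (b := Φ^[l] v i - multiplier Φ G l i v * v i) hv.1
  · rw [T.iterate_update_self, Polynomial.eval_add, Polynomial.eval_mul, Polynomial.eval_C,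
      Polynomial.eval_C, Polynomial.eval_X]
    ring

theorem card_slope_eq_zero_le (T : IsTriangularSystem d Φ G H) (i : Fin m) (l : ℕ) :
    #{v | NonvanishingAbove Φ G l i.succ v ∧ G i.castSucc (Φ^[l] v) = 0} ≤
      d * Fintype.card F ^ m := by
  obtain ⟨σ, hσ, hσd, hpoly⟩ := T.exists_polynomial_iterate i
  refine card_zeros_le_of_polynomial_on_lines i.succ d _
    (fun v s ↦ (T.nonvanishingAbove_update l _ v s).1) (fun v ↦ G i.castSucc (Φ^[l] v)) ?_
  intro v hv
  obtain ⟨Q, hdeg, heval⟩ := hpoly v l hv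
  refine ⟨Q, fun h0 ↦ hσ ?_, hdeg.trans_le hσd, heval⟩
  rw [← hdeg, h0, Polynomial.natDegree_zero]

theorem card_sum_multiplier_eq_zero_le (T : IsTriangularSystem d Φ G H) (i : Fin m) (K : ℕ)
    (c : ℕ → F) (hc : ∃ k < K, c k ≠ 0) :
    #{v | (∀ l < K, NonvanishingAbove Φ G l i.succ v) ∧
      ∑ k ∈ range K, c k * multiplier Φ G k i.castSucc v = 0} ≤ K * d * Fintype.card F ^ m := by
  obtain ⟨σ, hσ, hσd, hpoly⟩ := T.exists_polynomial_iterate i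
  refine card_zeros_le_of_polynomial_on_lines i.succ (K * d) _
    (fun v s hv l hl ↦ (T.nonvanishingAbove_update l _ v s).1 (hv l hl))
    (fun v ↦ ∑ k ∈ range K, c k * multiplier Φ G k i.castSucc v) ?_
  intro v hv
  choose! Q hdeg heval using fun l hl ↦ hpoly v l (hv l hl)
  refine ⟨_, sum_C_mul_prod_range_ne_zero hσ hdeg hc,
    (natDegree_sum_C_mul_prod_range_le hσ hdeg c).trans (Nat.mul_le_mul_left K hσd), fun s ↦ ?_⟩
  rw [Polynomial.eval_finsetSum]
  refine sum_congr rfl fun k hk ↦ ?_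
  rw [Polynomial.eval_mul, Polynomial.eval_C, Polynomial.eval_prod, multiplier]
  exact congrArg (c k * ·) <| prod_congr rfl fun l hl ↦
    heval l ((mem_range.1 hl).trans (mem_range.1 hk)) s

theorem card_multiplier_combination_eq_zero_le (T : IsTriangularSystem d Φ G H) (i : Fin m)
    (K : ℕ) (c : ℕ → F) (hc : ∃ k < K, c k ≠ 0) :
    #{v | ∑ k ∈ range K, c k * multiplier Φ G k i.castSucc v = 0} ≤
      (m + 1) * (d + 1) * K * Fintype.card F ^ m := by
  let zeroCoord : Fin (m + 1) × ℕ → Finset (Fin (m + 1) → F) := fun x ↦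
    {v | NonvanishingAbove Φ G x.2 x.1 v ∧ Φ^[x.2] v x.1 = 0}
  let zeroSlope : Fin m × ℕ → Finset (Fin (m + 1) → F) := fun x ↦
    {v | NonvanishingAbove Φ G x.2 x.1.succ v ∧ G x.1.castSucc (Φ^[x.2] v) = 0}
  let zeroSum : Finset (Fin (m + 1) → F) := {v | (∀ l < K, NonvanishingAbove Φ G l i.succ v) ∧
    ∑ k ∈ range K, c k * multiplier Φ G k i.castSucc v = 0}
  have hcover : ({v | ∑ k ∈ range K, c k * multiplier Φ G k i.castSucc v = 0} :
      Finset (Fin (m + 1) → F)) ⊆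
      (univ ×ˢ range K).biUnion zeroCoord ∪ (univ ×ˢ range K).biUnion zeroSlope ∪ zeroSum := by
    intro v hv
    by_contra hcon
    simp only [zeroCoord, zeroSlope, zeroSum, mem_union, mem_biUnion, mem_product, mem_univ,
      mem_range, true_and, not_or, not_exists, not_and, Prod.forall, mem_filter_univ] at hcon hv
    exact hcon.2 (T.nonvanishingAbove_of_lt hcon.1.1 hcon.1.2 i.succ) hv
  have hcoord : #((univ ×ˢ range K).biUnion zeroCoord) ≤ (m + 1) * K * Fintype.card F ^ m := by
    simpa only [card_product, card_univ, Fintype.card_fin, card_range] using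
      card_biUnion_le_card_mul (univ ×ˢ range K) zeroCoord _
        fun x _ ↦ T.card_iterate_eq_zero_le x.1 x.2
  have hslope : #((univ ×ˢ range K).biUnion zeroSlope) ≤ m * K * (d * Fintype.card F ^ m) := by
    simpa only [card_product, card_univ, Fintype.card_fin, card_range] using
      card_biUnion_le_card_mul (univ ×ˢ range K) zeroSlope _
        fun x _ ↦ T.card_slope_eq_zero_le x.1 x.2
  calc _ ≤ _ := card_le_card hcover
    _ ≤ _ := (card_union_le _ _).trans (Nat.add_le_add_right (card_union_le _ _) _)
    _ ≤ _ := add_le_add (add_le_add hcoord hslope) (T.card_sum_multiplier_eq_zero_le i K c hc)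
    _ = _ := by ring

end IsTriangularSystem

theorem norm_sum_addChar_le_card_of_affine {F V : Type*} [Field F] [Finite F] [DecidableEq F]
    [AddGroup V] [Fintype V] {ψ : AddChar F ℂ} (hψ : ψ.IsPrimitive) (e : F → V) (f c : V → F)
    (h : ∀ v s, f (v + e s) = f v + c v * s) : ‖∑ v, ψ (f v)‖ ≤ #{v | c v = 0} := by
  have := Fintype.ofFinite F
  have hcard : (0 : ℝ) < Fintype.card F := by exact_mod_cast Fintype.card_pos
  have htranslate : ∀ s, ∑ v, ψ (f (v + e s)) = ∑ v, ψ (f v) := fun s ↦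
    Equiv.sum_comp (Equiv.addRight (e s)) fun v ↦ ψ (f v)
  have hline : ∀ v, ∑ s, ψ (f (v + e s)) =
      ψ (f v) * ((if c v = 0 then Fintype.card F else 0 : ℕ) : ℂ) := fun v ↦ by
    rw [← AddChar.sum_mulShift (c v) hψ, mul_sum]
    exact sum_congr rfl fun s _ ↦ by rw [h, AddChar.map_add_eq_mul, mul_comm (c v)]
  have haverage : (Fintype.card F : ℂ) * ∑ v, ψ (f v) =
      ∑ v, ψ (f v) * ((if c v = 0 then Fintype.card F else 0 : ℕ) : ℂ) := by
    rw [← nsmul_eq_mul, ← card_univ, ← sum_const, ← sum_congr rfl fun s _ ↦ htranslate s, sum_comm]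
    exact sum_congr rfl fun v _ ↦ hline v
  refine le_of_mul_le_mul_left ?_ hcard
  calc (Fintype.card F : ℝ) * ‖∑ v, ψ (f v)‖
      = ‖(Fintype.card F : ℂ) * ∑ v, ψ (f v)‖ := by rw [norm_mul, Complex.norm_natCast]
    _ ≤ ∑ v, ‖ψ (f v) * ((if c v = 0 then Fintype.card F else 0 : ℕ) : ℂ)‖ := by
        rw [haverage]
        exact norm_sum_le _ _
    _ = ∑ v, ((if c v = 0 then Fintype.card F else 0 : ℕ) : ℝ) := sum_congr rfl fun v _ ↦ by
        rw [norm_mul, AddChar.norm_apply, one_mul, Complex.norm_natCast]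
    _ = Fintype.card F * #{v | c v = 0} := by
        rw [← Nat.cast_sum, ← sum_filter, sum_const, smul_eq_mul, mul_comm, Nat.cast_mul]

theorem IsTriangularSystem.norm_sum_addChar_le {F : Type*} [Field F] [Fintype F]
    {m d : ℕ} {Φ : (Fin (m + 1) → F) → Fin (m + 1) → F}
    {G H : Fin (m + 1) → (Fin (m + 1) → F) → F} (T : IsTriangularSystem d Φ G H)
    {ψ : AddChar F ℂ} (hψ : ψ.IsPrimitive) {b : Fin (m + 1) → F} {i : Fin m}
    (hb : ∀ j < i.castSucc, b j = 0) (hbi : b i.castSucc ≠ 0) (K : ℕ) (c : ℕ → F)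
    (hc : ∃ k < K, c k ≠ 0) :
    ‖∑ v, ψ (∑ k ∈ range K, c k * dotProduct b (Φ^[k] v))‖ ≤
      (m + 1) * (d + 1) * K * (Fintype.card F : ℝ) ^ m := by
  classical
  have haffine : ∀ v s, ∑ k ∈ range K, c k * dotProduct b (Φ^[k] (v + Pi.single i.castSucc s)) =
      ∑ k ∈ range K, c k * dotProduct b (Φ^[k] v) +
        b i.castSucc * (∑ k ∈ range K, c k * multiplier Φ G k i.castSucc v) * s := fun v s ↦ by
    rw [mul_sum, sum_mul, ← sum_add_distrib]
    refine sum_congr rfl fun k _ ↦ ?_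
    rw [T.dotProduct_iterate_add_single hb]
    ring
  refine (norm_sum_addChar_le_card_of_affine hψ _ _ _ haffine).trans ?_
  simp only [mul_eq_zero, hbi, false_or]
  exact_mod_cast T.card_multiplier_combination_eq_zero_le i K c hc

end TriangularSystems

section Moments

variable {α R : Type*} [CommRing R] {ν : ℕ}

theorem card_filter_forall_exists_eq_le [DecidableEq α] (ν : ℕ) (s : Finset α) :
    #{x ∈ (Fintype.piFinset fun _ : Fin ν ↦ s) ×ˢ (Fintype.piFinset fun _ : Fin ν ↦ s) |
      ∀ r, ∃ r', x.1 r = x.2 r'} ≤ ν ^ ν * #s ^ ν := by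
  have hsub : {x ∈ (Fintype.piFinset fun _ : Fin ν ↦ s) ×ˢ (Fintype.piFinset fun _ : Fin ν ↦ s) |
      ∀ r, ∃ r', x.1 r = x.2 r'} ⊆
      ((univ : Finset (Fin ν → Fin ν)) ×ˢ (Fintype.piFinset fun _ : Fin ν ↦ s)).image
        fun y ↦ (y.2 ∘ y.1, y.2) := by
    intro x hx
    obtain ⟨hxs, hmatch⟩ := mem_filter.1 hx
    choose π hπ using hmatch
    exact mem_image.2 ⟨(π, x.2), mem_product.2 ⟨mem_univ _, (mem_product.1 hxs).2⟩,
      Prod.ext (funext fun r ↦ (hπ r).symm) rfl⟩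
  refine (card_le_card hsub).trans (card_image_le.trans_eq ?_)
  simp only [card_product, card_univ, Fintype.card_fun, Fintype.card_fin,
    Fintype.card_piFinset_const]

/-- The coefficient with which `f k` occurs in `∑ r, f (x r) - ∑ r, f (y r)`. -/
def multiplicityDiff (R : Type*) [CommRing R] [DecidableEq α] (x y : Fin ν → α) (k : α) : R :=
  (#{r | x r = k} : R) - #{r | y r = k}

theorem sum_multiplicityDiff_mul [DecidableEq α] {s : Finset α} {x y : Fin ν → α}
    (hx : ∀ r, x r ∈ s) (hy : ∀ r, y r ∈ s) (f : α → R) :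
    ∑ k ∈ s, multiplicityDiff R x y k * f k = ∑ r, f (x r) - ∑ r, f (y r) := by
  have hfiber : ∀ z : Fin ν → α, (∀ r, z r ∈ s) →
      ∑ k ∈ s, (#{r | z r = k} : R) * f k = ∑ r, f (z r) := fun z hz ↦ by
    rw [← sum_fiberwise_of_maps_to (g := z) fun r _ ↦ hz r]
    refine sum_congr rfl fun k _ ↦ ?_
    rw [sum_congr rfl fun r hr ↦ congrArg f (mem_filter.1 hr).2, sum_const, nsmul_eq_mul]
  simp only [multiplicityDiff, sub_mul, sum_sub_distrib]
  rw [hfiber x hx, hfiber y hy]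

theorem exists_multiplicityDiff_ne_zero [DecidableEq α] {p : ℕ} [CharP R p] (hνp : ν < p)
    {s : Finset α} {x y : Fin ν → α} (hx : ∀ r, x r ∈ s) (hxy : ¬∀ r, ∃ r', x r = y r') :
    ∃ k ∈ s, multiplicityDiff R x y k ≠ 0 := by
  push Not at hxy
  obtain ⟨r, hr⟩ := hxy
  refine ⟨x r, hx r, fun h0 ↦ ?_⟩
  have hempty : ({r' | y r' = x r} : Finset (Fin ν)) = ∅ :=
    filter_eq_empty_iff.2 fun r' _ h ↦ hr r' h.symm
  rw [multiplicityDiff, hempty, card_empty, Nat.cast_zero, sub_zero,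
    CharP.cast_eq_zero_iff R p] at h0
  have hpos : 0 < #{r' | x r' = x r} := card_pos.2 ⟨r, by simp⟩
  have hle : #{r' | x r' = x r} ≤ ν := (card_le_univ _).trans_eq (Fintype.card_fin ν)
  exact (Nat.le_of_dvd hpos h0).not_gt (hle.trans_lt hνp)

theorem norm_sum_addChar_pow_two_mul [DecidableEq α] [Finite R] (ψ : AddChar R ℂ) (ν : ℕ)
    (s : Finset α) (f : α → R) :
    ((‖∑ k ∈ s, ψ (f k)‖ ^ (2 * ν) : ℝ) : ℂ) =
      ∑ x ∈ (Fintype.piFinset fun _ : Fin ν ↦ s) ×ˢ (Fintype.piFinset fun _ : Fin ν ↦ s),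
        ψ (∑ k ∈ s, multiplicityDiff R x.1 x.2 k * f k) := by
  have hpow : (∑ k ∈ s, ψ (f k)) ^ ν =
      ∑ x ∈ Fintype.piFinset fun _ : Fin ν ↦ s, ψ (∑ r, f (x r)) := by
    rw [← Fin.prod_const, prod_univ_sum]
    exact sum_congr rfl fun x _ ↦
      (map_prod ψ.toMonoidHom (fun r ↦ Multiplicative.ofAdd (f (x r))) univ).symm
  rw [pow_mul, Complex.ofReal_pow, Complex.ofReal_pow, ← Complex.mul_conj', mul_pow, ← map_pow,
    hpow, map_sum, sum_mul_sum, sum_product]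
  refine sum_congr rfl fun x hx ↦ sum_congr rfl fun y hy ↦ ?_
  rw [sum_multiplicityDiff_mul (Fintype.mem_piFinset.1 hx) (Fintype.mem_piFinset.1 hy),
    sub_eq_add_neg, AddChar.map_add_eq_mul, AddChar.map_neg_eq_conj]

theorem sum_norm_sum_addChar_pow_le {V : Type*} [Fintype V] [Finite R] {p : ℕ} [CharP R p]
    (ψ : AddChar R ℂ) (hνp : ν < p) (s : Finset α) (f : α → V → R) {B : ℝ} (hB₀ : 0 ≤ B)
    (hB : ∀ c : α → R, (∃ k ∈ s, c k ≠ 0) → ‖∑ v, ψ (∑ k ∈ s, c k * f k v)‖ ≤ B) :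
    ∑ v, ‖∑ k ∈ s, ψ (f k v)‖ ^ (2 * ν) ≤
      ν ^ ν * #s ^ ν * Fintype.card V + #s ^ (2 * ν) * B := by
  classical
  set Ω := (Fintype.piFinset fun _ : Fin ν ↦ s) ×ˢ (Fintype.piFinset fun _ : Fin ν ↦ s) with hΩ
  set matched : (Fin ν → α) × (Fin ν → α) → Prop := fun x ↦ ∀ r, ∃ r', x.1 r = x.2 r'
  let T : (Fin ν → α) × (Fin ν → α) → ℂ := fun x ↦
    ∑ v, ψ (∑ k ∈ s, multiplicityDiff R x.1 x.2 k * f k v)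
  have hexpand : ((∑ v, ‖∑ k ∈ s, ψ (f k v)‖ ^ (2 * ν) : ℝ) : ℂ) = ∑ x ∈ Ω, T x := by
    rw [sum_comm, Complex.ofReal_sum]
    exact sum_congr rfl fun v _ ↦ norm_sum_addChar_pow_two_mul ψ ν s fun k ↦ f k v
  have hΩcard : (#Ω : ℝ) = #s ^ (2 * ν) := by
    rw [hΩ, card_product, Fintype.card_piFinset_const, Nat.cast_mul, Nat.cast_pow, ← pow_add,
      two_mul]
  have hmatched : ∑ x ∈ Ω with matched x, ‖T x‖ ≤ ν ^ ν * #s ^ ν * Fintype.card V := by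
    refine (sum_le_card_nsmul _ _ (Fintype.card V : ℝ) fun x _ ↦ ?_).trans ?_
    · refine (norm_sum_le _ _).trans_eq ?_
      simp only [AddChar.norm_apply, sum_const, card_univ, nsmul_eq_mul, mul_one]
    · rw [nsmul_eq_mul]
      gcongr
      exact_mod_cast card_filter_forall_exists_eq_le ν s
  have hunmatched : ∑ x ∈ Ω with ¬matched x, ‖T x‖ ≤ #s ^ (2 * ν) * B := by
    refine (sum_le_card_nsmul _ _ B fun x hx ↦ ?_).trans ?_
    · obtain ⟨hxΩ, hxm⟩ := mem_filter.1 hx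
      have hxs := Fintype.mem_piFinset.1 (mem_product.1 hxΩ).1
      exact hB _ (exists_multiplicityDiff_ne_zero hνp hxs hxm)
    · rw [nsmul_eq_mul, ← hΩcard]
      gcongr
      exact filter_subset _ _
  calc ∑ v, ‖∑ k ∈ s, ψ (f k v)‖ ^ (2 * ν)
      = ‖∑ x ∈ Ω, T x‖ := by
        rw [← hexpand, Complex.norm_real, Real.norm_of_nonneg (by positivity)]
    _ ≤ ∑ x ∈ Ω, ‖T x‖ := norm_sum_le _ _
    _ = _ := (sum_filter_add_sum_filter_not Ω matched _).symm
    _ ≤ _ := add_le_add hmatched hunmatched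

end Moments

section ShiftAveraging

theorem norm_sum_range_sub_sum_range_add_le {E : Type*} [SeminormedAddCommGroup E] {a : ℕ → E}
    (ha : ∀ n, ‖a n‖ ≤ 1) (N k : ℕ) :
    ‖∑ n ∈ range N, a n - ∑ n ∈ range N, a (n + k)‖ ≤ 2 * k := by
  have htail : ∀ b : ℕ → E, (∀ n, ‖b n‖ ≤ 1) → ‖∑ n ∈ range k, b n‖ ≤ k := fun b hb ↦ by
    simpa using norm_sum_le_of_le (range k) fun n _ ↦ hb n
  have hsplit : ∑ n ∈ range N, a n - ∑ n ∈ range N, a (n + k) =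
      ∑ n ∈ range k, a n - ∑ n ∈ range k, a (N + n) := by
    have hleft := sum_range_add a N k
    have hright := sum_range_add a k N
    rw [add_comm k N, hleft] at hright
    simp only [add_comm _ k]
    rw [sub_eq_sub_iff_add_eq_add, hright]
  rw [hsplit, two_mul]
  exact (norm_sub_le _ _).trans (add_le_add (htail _ ha) (htail _ fun n ↦ ha (N + n)))

theorem mul_norm_sum_range_le {a : ℕ → ℂ} (ha : ∀ n, ‖a n‖ ≤ 1) (N K : ℕ) :
    K * ‖∑ n ∈ range N, a n‖ ≤ ∑ n ∈ range N, ‖∑ k ∈ range K, a (n + k)‖ + 2 * (K : ℝ) ^ 2 := by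
  have hsplit : (K : ℂ) * ∑ n ∈ range N, a n = ∑ n ∈ range N, ∑ k ∈ range K, a (n + k) +
      ∑ k ∈ range K, (∑ n ∈ range N, a n - ∑ n ∈ range N, a (n + k)) := by
    rw [sum_sub_distrib, sum_const, card_range, nsmul_eq_mul,
      sum_comm (s := range K), add_sub_cancel]
  have hboundary : ∀ k ∈ range K,
      ‖∑ n ∈ range N, a n - ∑ n ∈ range N, a (n + k)‖ ≤ 2 * K := fun k hk ↦ by
    have hkK : (k : ℝ) ≤ K := by exact_mod_cast (mem_range.1 hk).le
    linarith [norm_sum_range_sub_sum_range_add_le ha N k]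
  calc K * ‖∑ n ∈ range N, a n‖ = ‖(K : ℂ) * ∑ n ∈ range N, a n‖ := by
        rw [norm_mul, Complex.norm_natCast]
    _ ≤ _ := hsplit ▸ norm_add_le _ _
    _ ≤ ∑ n ∈ range N, ‖∑ k ∈ range K, a (n + k)‖ + ∑ k ∈ range K, 2 * (K : ℝ) :=
        add_le_add (norm_sum_le _ _) (norm_sum_le_of_le _ hboundary)
    _ = _ := by
        rw [sum_const, card_range, nsmul_eq_mul]
        ring

theorem pow_sum_range_comp_le {V : Type*} [Fintype V] {N : ℕ} {w : ℕ → V}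
    (hw : Set.InjOn w (Set.Iio N)) {g : V → ℝ} (hg : ∀ v, 0 ≤ g v) {k : ℕ} (hk : k ≠ 0) :
    N * (∑ n ∈ range N, g (w n)) ^ k ≤ N ^ k * ∑ v, g v ^ k := by
  classical
  obtain ⟨q, rfl⟩ := Nat.exists_eq_succ_of_ne_zero hk
  rcases N.eq_zero_or_pos with rfl | hN
  · simp
  have : (0 : ℝ) < N := Nat.cast_pos.2 hN
  have hmean := pow_sum_div_card_le_sum_pow (s := range N) (fun n _ ↦ hg (w n)) q
  rw [card_range, div_le_iff₀' (by positivity)] at hmean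
  calc N * (∑ n ∈ range N, g (w n)) ^ (q + 1)
      ≤ N * (N ^ q * ∑ n ∈ range N, g (w n) ^ (q + 1)) := by gcongr
    _ = N ^ (q + 1) * ∑ v ∈ (range N).image w, g v ^ (q + 1) := by
        rw [sum_image (by rwa [coe_range]), pow_succ' (N : ℝ), mul_assoc]
    _ ≤ N ^ (q + 1) * ∑ v, g v ^ (q + 1) := by
        gcongr
        · exact fun v _ _ ↦ pow_nonneg (hg v) _
        · exact subset_univ _

end ShiftAveraging

section TriangularOrbits

theorem le_mul_rpow_neg_inv_of_pow_mul_le {n : ℕ} (hn : n ≠ 0) {W M a k : ℝ} (hM : 1 ≤ M)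
    (ha : 0 ≤ a) (hk : 0 < k) (h : W ^ n * k ≤ M * a ^ n) :
    W ≤ M * a * k ^ (-(n : ℝ)⁻¹) := by
  have hroot : (k ^ (-(n : ℝ)⁻¹)) ^ n = k⁻¹ := by
    rw [Real.rpow_neg hk.le, inv_pow, Real.rpow_inv_natCast_pow hk.le hn]
  refine le_of_pow_le_pow_left₀ hn (by positivity) ?_
  calc W ^ n ≤ M * a ^ n * k⁻¹ := (le_mul_inv_iff₀ hk).2 h
    _ ≤ M ^ n * a ^ n * k⁻¹ := by
        gcongr
        exact le_self_pow₀ hM hn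
    _ = (M * a * k ^ (-(n : ℝ)⁻¹)) ^ n := by rw [mul_pow, mul_pow, hroot]

namespace IsTriangularSystem

variable {F : Type*} [Field F] [Fintype F] {p : ℕ} [CharP F p] {m d : ℕ}
  {Φ : (Fin (m + 1) → F) → Fin (m + 1) → F} {G H : Fin (m + 1) → (Fin (m + 1) → F) → F}
  {ψ : AddChar F ℂ} {b : Fin (m + 1) → F} {i : Fin m} {ν K N : ℕ}

theorem sum_norm_sum_iterate_pow_le (T : IsTriangularSystem d Φ G H) (hψ : ψ.IsPrimitive)
    (hb : ∀ j < i.castSucc, b j = 0) (hbi : b i.castSucc ≠ 0) (hνp : ν < p) (hK : 1 ≤ K)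
    (hνK : Fintype.card F ≤ K ^ ν) :
    ∑ v, ‖∑ k ∈ range K, ψ (dotProduct b (Φ^[k] v))‖ ^ (2 * ν) ≤
      (ν ^ ν + (m + 1) * (d + 1)) * (K : ℝ) ^ (2 * ν) * (K * (Fintype.card F : ℝ) ^ m) := by
  have hmoment := sum_norm_sum_addChar_pow_le (V := Fin (m + 1) → F) ψ hνp (range K)
    (fun k v ↦ dotProduct b (Φ^[k] v))
    (B := (m + 1) * (d + 1) * K * (Fintype.card F : ℝ) ^ m) (by positivity)
    fun c ⟨k, hk, hck⟩ ↦ T.norm_sum_addChar_le hψ hb hbi K c ⟨k, mem_range.1 hk, hck⟩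
  have hK₁ : (1 : ℝ) ≤ K := Nat.one_le_cast.2 hK
  have hcardK : (Fintype.card F : ℝ) ≤ K ^ ν * K := by
    have hcast : (Fintype.card F : ℝ) ≤ K ^ ν := by exact_mod_cast hνK
    exact hcast.trans (le_mul_of_one_le_right (by positivity) hK₁)
  rw [card_range, Fintype.card_fun, Fintype.card_fin, Nat.cast_pow] at hmoment
  calc _ ≤ _ := hmoment
    _ = ν ^ ν * K ^ ν * Fintype.card F ^ m * Fintype.card F +
        (m + 1) * (d + 1) * (K : ℝ) ^ (2 * ν) * (K * (Fintype.card F : ℝ) ^ m) := by ring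
    _ ≤ ν ^ ν * K ^ ν * Fintype.card F ^ m * (K ^ ν * K) +
        (m + 1) * (d + 1) * (K : ℝ) ^ (2 * ν) * (K * (Fintype.card F : ℝ) ^ m) := by gcongr
    _ = _ := by ring

theorem sum_norm_sum_iterate_add_le (T : IsTriangularSystem d Φ G H) (hψ : ψ.IsPrimitive)
    (hb : ∀ j < i.castSucc, b j = 0) (hbi : b i.castSucc ≠ 0) (hν : ν ≠ 0) (hνp : ν < p)
    (hK : 1 ≤ K) (hνK : Fintype.card F ≤ K ^ ν) (hKN : Fintype.card F ^ m * K ^ 2 ≤ 4 * N)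
    {v : Fin (m + 1) → F} (hv : Set.InjOn (Φ^[·] v) (Set.Iio N)) :
    ∑ n ∈ range N, ‖∑ k ∈ range K, ψ (dotProduct b (Φ^[k] (Φ^[n] v)))‖ ≤
      4 * (ν ^ ν + (m + 1) * (d + 1)) * (N * K) * (K : ℝ) ^ (-((2 * ν : ℕ) : ℝ)⁻¹) := by
  have hKpos : (0 : ℝ) < K := Nat.cast_pos.2 hK
  have hNpos : (0 : ℝ) < N := by
    have hlow : 0 < Fintype.card F ^ m * K ^ 2 :=
      Nat.mul_pos (pow_pos Fintype.card_pos m) (pow_pos hK 2)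
    exact_mod_cast (by omega : 0 < N)
  have hKN' : (Fintype.card F : ℝ) ^ m * K ^ 2 ≤ 4 * N := by exact_mod_cast hKN
  have hcoeff : (1 : ℝ) ≤ 4 * (ν ^ ν + (m + 1) * (d + 1)) := by
    have hone : (1 : ℝ) ≤ (m + 1) * (d + 1) := by
      exact_mod_cast Nat.mul_pos m.succ_pos d.succ_pos
    have hpow : (0 : ℝ) ≤ (ν : ℝ) ^ ν := by positivity
    linarith
  refine le_mul_rpow_neg_inv_of_pow_mul_le (mul_ne_zero two_ne_zero hν) hcoeff (by positivity)
    hKpos (le_of_mul_le_mul_left ?_ hNpos)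
  calc (N : ℝ) * ((∑ n ∈ range N, ‖∑ k ∈ range K, ψ (dotProduct b (Φ^[k] (Φ^[n] v)))‖) ^ (2 * ν) *
        K)
      = N * (∑ n ∈ range N, ‖∑ k ∈ range K, ψ (dotProduct b (Φ^[k] (Φ^[n] v)))‖) ^ (2 * ν) * K :=
        (mul_assoc _ _ _).symm
    _ ≤ N ^ (2 * ν) * ((ν ^ ν + (m + 1) * (d + 1)) * (K : ℝ) ^ (2 * ν) *
          (K * (Fintype.card F : ℝ) ^ m)) * K := by
        refine mul_le_mul_of_nonneg_right ?_ hKpos.le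
        exact (pow_sum_range_comp_le hv (fun _ ↦ norm_nonneg _) (mul_ne_zero two_ne_zero hν)).trans
          (mul_le_mul_of_nonneg_left (T.sum_norm_sum_iterate_pow_le hψ hb hbi hνp hK hνK)
            (by positivity))
    _ = N ^ (2 * ν) * (ν ^ ν + (m + 1) * (d + 1)) * (K : ℝ) ^ (2 * ν) *
          ((Fintype.card F : ℝ) ^ m * K ^ 2) := by ring
    _ ≤ N ^ (2 * ν) * (ν ^ ν + (m + 1) * (d + 1)) * (K : ℝ) ^ (2 * ν) * (4 * N) := by gcongr
    _ = N * (4 * (ν ^ ν + (m + 1) * (d + 1)) * (N * K : ℝ) ^ (2 * ν)) := by ring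

theorem norm_sum_iterate_le (T : IsTriangularSystem d Φ G H) (hψ : ψ.IsPrimitive)
    (hb : ∀ j < i.castSucc, b j = 0) (hbi : b i.castSucc ≠ 0) (hν : ν ≠ 0) (hνp : ν < p)
    (hK : 1 ≤ K) (hνK : Fintype.card F ≤ K ^ ν) (hKN : Fintype.card F ^ m * K ^ 2 ≤ 4 * N)
    {v : Fin (m + 1) → F} (hv : Set.InjOn (Φ^[·] v) (Set.Iio N)) :
    ‖∑ n ∈ range N, ψ (dotProduct b (Φ^[n] v))‖ ≤
      (4 * (ν ^ ν + (m + 1) * (d + 1)) + 8) * N * (K : ℝ) ^ (-((2 * ν : ℕ) : ℝ)⁻¹) := by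
  have hK₁ : (1 : ℝ) ≤ K := Nat.one_le_cast.2 hK
  have hwindows : K * ‖∑ n ∈ range N, ψ (dotProduct b (Φ^[n] v))‖ ≤
      ∑ n ∈ range N, ‖∑ k ∈ range K, ψ (dotProduct b (Φ^[k] (Φ^[n] v)))‖ + 2 * (K : ℝ) ^ 2 := by
    simpa only [← Function.iterate_add_apply, add_comm] using
      mul_norm_sum_range_le (a := fun n ↦ ψ (dotProduct b (Φ^[n] v)))
        (fun n ↦ (AddChar.norm_apply ψ _).le) N K
  have hKsq : (K : ℝ) ^ 2 ≤ 4 * (N * K) * (K : ℝ) ^ (-((2 * ν : ℕ) : ℝ)⁻¹) := by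
    have hNK : (K : ℝ) ^ 2 ≤ 4 * N := by
      exact_mod_cast (Nat.le_mul_of_pos_left _ (pow_pos Fintype.card_pos m)).trans hKN
    have hone : 1 ≤ K * (K : ℝ) ^ (-((2 * ν : ℕ) : ℝ)⁻¹) := by
      have hexp : 0 ≤ 1 + -((2 * ν : ℕ) : ℝ)⁻¹ := by
        linarith [Nat.cast_inv_le_one (α := ℝ) (2 * ν)]
      simpa only [Real.rpow_add (zero_lt_one.trans_le hK₁), Real.rpow_one] using
        Real.one_le_rpow hK₁ hexp
    calc (K : ℝ) ^ 2 ≤ 4 * N * 1 := by rwa [mul_one]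
      _ ≤ 4 * N * (K * (K : ℝ) ^ (-((2 * ν : ℕ) : ℝ)⁻¹)) := by gcongr
      _ = _ := by ring
  refine le_of_mul_le_mul_left ?_ (zero_lt_one.trans_le hK₁)
  linarith [T.sum_norm_sum_iterate_add_le hψ hb hbi hν hνp hK hνK hKN hv]

end IsTriangularSystem

theorem exists_window_length {p m N ν : ℕ} {ε : ℝ} (hp : 1 ≤ p) (hε : 0 < ε) (hν : 2 / ε ≤ ν)
    (hN : (p : ℝ) ^ (m + ε) ≤ N) :
    ∃ K : ℕ, 1 ≤ K ∧ p ≤ K ^ ν ∧ p ^ m * K ^ 2 ≤ 4 * N ∧ (p : ℝ) ^ (ε / 2) ≤ K := by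
  have hp₁ : (1 : ℝ) ≤ p := Nat.one_le_cast.2 hp
  have hp₀ : (0 : ℝ) < p := zero_lt_one.trans_le hp₁
  set x := (p : ℝ) ^ (ε / 2) with hx
  have hx₁ : 1 ≤ x := Real.one_le_rpow hp₁ (by positivity)
  have hxK : x ≤ ⌈x⌉₊ := Nat.le_ceil x
  have hpx : (p : ℝ) ≤ x ^ ν := by
    rw [hx, ← Real.rpow_mul_natCast hp₀.le]
    refine Real.self_le_rpow_of_one_le hp₁ ?_
    rw [div_le_iff₀ hε] at hν
    linarith
  have hpK : (p : ℝ) ≤ (⌈x⌉₊ : ℝ) ^ ν := hpx.trans (by gcongr)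
  have hKx : (⌈x⌉₊ : ℝ) ≤ 2 * x := by linarith [Nat.ceil_lt_add_one (zero_le_one.trans hx₁)]
  have hxx : x ^ 2 = (p : ℝ) ^ ε := by
    rw [hx, ← Real.rpow_mul_natCast hp₀.le, Nat.cast_two, div_mul_cancel₀ _ two_ne_zero]
  have hKN : (p : ℝ) ^ m * (⌈x⌉₊ : ℝ) ^ 2 ≤ 4 * N :=
    calc (p : ℝ) ^ m * (⌈x⌉₊ : ℝ) ^ 2 ≤ p ^ m * (2 * x) ^ 2 := by gcongr
      _ = 4 * (p : ℝ) ^ (m + ε) := by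
          rw [Real.rpow_add hp₀, Real.rpow_natCast, ← hxx]
          ring
      _ ≤ 4 * N := by gcongr
  exact ⟨⌈x⌉₊, Nat.one_le_ceil_iff.2 (zero_lt_one.trans_le hx₁), by exact_mod_cast hpK,
    by exact_mod_cast hKN, hxK⟩

theorem exists_norm_sum_triangular_iterate_le (m d : ℕ) (ε : ℝ) (hε : 0 < ε) :
    ∃ δ c : ℝ, 0 < δ ∧ 0 < c ∧ ∀ (p : ℕ) [Fact p.Prime] {ψ : AddChar (ZMod p) ℂ}
      {Φ : (Fin (m + 1) → ZMod p) → Fin (m + 1) → ZMod p}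
      {G H : Fin (m + 1) → (Fin (m + 1) → ZMod p) → ZMod p} {b : Fin (m + 1) → ZMod p} {i : Fin m}
      {N : ℕ} {v : Fin (m + 1) → ZMod p}, ψ.IsPrimitive → IsTriangularSystem d Φ G H →
      (∀ j < i.castSucc, b j = 0) → b i.castSucc ≠ 0 → (p : ℝ) ^ (m + ε) ≤ N →
      Set.InjOn (Φ^[·] v) (Set.Iio N) →
      ‖∑ n ∈ range N, ψ (dotProduct b (Φ^[n] v))‖ ≤ c * N * (p : ℝ) ^ (-δ) := by
  obtain ⟨ν, hν⟩ := exists_nat_ge (2 / ε)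
  have hνpos : (0 : ℝ) < ν := (by positivity : 0 < 2 / ε).trans_le hν
  have hν₀ : ν ≠ 0 := by exact_mod_cast hνpos.ne'
  have hδ : 0 < ε / 2 * ((2 * ν : ℕ) : ℝ)⁻¹ := by positivity
  set δ := ε / 2 * ((2 * ν : ℕ) : ℝ)⁻¹
  refine ⟨δ, 4 * (ν ^ ν + (m + 1) * (d + 1)) + 8 + (ν : ℝ) ^ δ, hδ, by positivity, ?_⟩
  intro p _ ψ Φ G H b i N v hψ T hb hbi hN hv
  have hp : (1 : ℝ) ≤ p := by exact_mod_cast (Fact.out : p.Prime).one_le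
  have hp₀ : (0 : ℝ) < p := zero_lt_one.trans_le hp
  rcases le_or_gt p ν with hpν | hνp
  · have hone : 1 ≤ (ν : ℝ) ^ δ * (p : ℝ) ^ (-δ) := by
      rw [Real.rpow_neg hp₀.le, ← div_eq_mul_inv, one_le_div (by positivity)]
      gcongr
    calc _ ≤ (N : ℝ) := (norm_sum_le _ _).trans_eq (by simp)
      _ ≤ N * ((ν : ℝ) ^ δ * (p : ℝ) ^ (-δ)) := le_mul_of_one_le_right (by positivity) hone
      _ = (ν : ℝ) ^ δ * N * (p : ℝ) ^ (-δ) := by ring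
      _ ≤ _ := by gcongr; exact le_add_of_nonneg_left (by positivity)
  · obtain ⟨K, hK, hνK, hKN, hxK⟩ :=
      exists_window_length (Fact.out : p.Prime).one_le hε hν hN
    have hKδ : (K : ℝ) ^ (-((2 * ν : ℕ) : ℝ)⁻¹) ≤ (p : ℝ) ^ (-δ) := by
      rw [show -δ = ε / 2 * -((2 * ν : ℕ) : ℝ)⁻¹ from (mul_neg _ _).symm, Real.rpow_mul hp₀.le]
      exact Real.rpow_le_rpow_of_nonpos (by positivity) hxK (neg_nonpos.2 (by positivity))
    calc _ ≤ _ := T.norm_sum_iterate_le hψ hb hbi hν₀ hνp hK (by rwa [ZMod.card])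
          (by rwa [ZMod.card]) hv
      _ ≤ _ := mul_le_mul (mul_le_mul_of_nonneg_right (le_add_of_nonneg_right (by positivity))
          N.cast_nonneg) hKδ (by positivity) (by positivity)

end TriangularOrbits

section PeriodicSequences

theorem sum_range_mul_of_periodic {E : Type*} [AddCommMonoid E] {a : ℕ → E} {t : ℕ}
    (ha : Function.Periodic a t) (q : ℕ) :
    ∑ n ∈ range (q * t), a n = q • ∑ n ∈ range t, a n := by
  induction q with
  | zero => simp
  | succ q ih =>
    rw [Nat.succ_mul, sum_range_add, ih, succ_nsmul]
    congr 1
    exact sum_congr rfl fun n _ ↦ by rw [add_comm, ← smul_eq_mul, ha.nsmul q n]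

theorem norm_sum_range_le_of_periodic {E : Type*} [SeminormedAddCommGroup E] {a : ℕ → E} {t : ℕ}
    (hbound : ∀ n, ‖a n‖ ≤ 1) (ht : 0 < t) (ha : Function.Periodic a t) (N : ℕ) :
    ‖∑ n ∈ range N, a n‖ ≤ (N / t : ℕ) * ‖∑ n ∈ range t, a n‖ + t := by
  have hrest : ‖∑ n ∈ range (N % t), a (N / t * t + n)‖ ≤ t := calc
    _ ≤ ∑ _n ∈ range (N % t), (1 : ℝ) := norm_sum_le_of_le _ fun n _ ↦ hbound _
    _ = (N % t : ℕ) := by simp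
    _ ≤ t := by exact_mod_cast (Nat.mod_lt N ht).le
  rw [← Nat.div_add_mod' N t, sum_range_add, sum_range_mul_of_periodic ha, Nat.div_add_mod']
  exact (norm_add_le _ _).trans (add_le_add norm_nsmul_le hrest)

theorem le_mul_card_pow_of_periodic_last {α : Type*} [Fintype α] {m : ℕ}
    {w : ℕ → Fin (m + 1) → α} {N t : ℕ} (ht : 0 < t) (hinj : Set.InjOn w (Set.Iio N))
    (hper : Function.Periodic (fun n ↦ w n (Fin.last m)) t) : N ≤ t * Fintype.card α ^ m := by
  have hcard := card_le_card_of_injOn (s := range N) (t := range t ×ˢ univ)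
    (fun n ↦ (n % t, (Fin.last m).removeNth (w n)))
    (fun n _ ↦ mem_product.2 ⟨mem_range.2 (Nat.mod_lt n ht), mem_univ _⟩) ?_
  · simpa using hcard
  · intro n hn k hk heq
    obtain ⟨hmod, hinit⟩ := Prod.mk.inj heq
    refine hinj (by simpa using hn) (by simpa using hk) ?_
    rw [← Fin.insertNth_self_removeNth (Fin.last m) (w n), hinit, ← hper.map_mod_nat n, hmod,
      hper.map_mod_nat k, Fin.insertNth_self_removeNth]

end PeriodicSequences

section AffineRecurrences

theorem affine_recurrence_one {R : Type*} [Ring R] {h : R} {x : ℕ → R}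
    (hx : ∀ n, x (n + 1) = x n + h) (n : ℕ) : x n = x 0 + n * h := by
  induction n with
  | zero => simp
  | succ n ih => rw [hx, ih, Nat.cast_succ, add_one_mul, add_assoc]

theorem affine_recurrence_of_fixed {R : Type*} [Ring R] {g h y : R} {x : ℕ → R}
    (hx : ∀ n, x (n + 1) = g * x n + h) (hy : g * y + h = y) (n : ℕ) :
    x n = y + g ^ n * (x 0 - y) := by
  induction n with
  | zero => simp
  | succ n ih => rw [hx, ih, mul_add, add_right_comm, hy, pow_succ', mul_assoc]

theorem exists_affine_fixed_point {F : Type*} [Field F] {g : F} (hg : g ≠ 1) (h : F) :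
    ∃ y, g * y + h = y := by
  have hsub : 1 - g ≠ 0 := sub_ne_zero.2 hg.symm
  refine ⟨h / (1 - g), ?_⟩
  field_simp
  ring

theorem norm_sum_addChar_affine_recurrence {R : Type*} [CommRing R] [Finite R]
    {ψ : AddChar R ℂ} {g h y : R} {x : ℕ → R} (hx : ∀ n, x (n + 1) = g * x n + h)
    (hy : g * y + h = y) (β : R) (t : ℕ) :
    ‖∑ n ∈ range t, ψ (β * x n)‖ = ‖∑ n ∈ range t, ψ (β * (x 0 - y) * g ^ n)‖ := by
  have hterm : ∀ n, ψ (β * x n) = ψ (β * y) * ψ (β * (x 0 - y) * g ^ n) := fun n ↦ by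
    rw [← AddChar.map_add_eq_mul, affine_recurrence_of_fixed hx hy n]
    ring_nf
  simp only [hterm]
  rw [← mul_sum, norm_mul, AddChar.norm_apply, one_mul]

theorem sum_range_addChar_arithmetic_eq_zero {p : ℕ} [Fact p.Prime] {ψ : AddChar (ZMod p) ℂ}
    (hψ : ψ.IsPrimitive) {β h : ZMod p} (hβ : β ≠ 0) (hh : h ≠ 0) (x : ZMod p) :
    ∑ n ∈ range p, ψ (β * (x + n * h)) = 0 := by
  have hterm : ∀ n : ℕ, ψ (β * (x + n * h)) = ψ (β * x) * ψ (β * h) ^ n := fun n ↦ by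
    rw [← AddChar.map_nsmul_eq_pow, ← AddChar.map_add_eq_mul, nsmul_eq_mul]
    ring_nf
  have hne : ψ (β * h) ≠ 1 := fun heq ↦
    mul_ne_zero hβ hh ((hψ.zmod_char_eq_one_iff p _).1 heq)
  have hroot : ψ (β * h) ^ p = 1 := by
    rw [← AddChar.map_nsmul_eq_pow, nsmul_eq_mul, CharP.cast_eq_zero, zero_mul,
      AddChar.map_zero_eq_one]
  simp only [hterm]
  rw [← mul_sum, geom_sum_eq hne, hroot, sub_self, zero_div, mul_zero]

theorem sum_range_orderOf_pow {G M : Type*} [Group G] [AddCommMonoid M] {g : G}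
    (hg : IsOfFinOrder g) [Fintype (Subgroup.zpowers g)] (f : G → M) :
    ∑ n ∈ range (orderOf g), f (g ^ n) = ∑ h : Subgroup.zpowers g, f h := by
  rw [← Fin.sum_univ_eq_sum_range (fun n ↦ f (g ^ n)), ← Equiv.sum_comp (finEquivZPowers hg)]
  simp [finEquivZPowers_apply]

theorem exists_norm_sum_geometric_le (ε : ℝ) (hε : 0 < ε) :
    ∃ δ > (0 : ℝ), ∀ (p : ℕ) [Fact p.Prime] {ψ : AddChar (ZMod p) ℂ} {g : (ZMod p)ˣ}
      {a : ZMod p}, ψ.IsPrimitive → (p : ℝ) ^ ε ≤ orderOf g → a ≠ 0 →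
        ‖∑ n ∈ range (orderOf g), ψ (a * g ^ n)‖ ≤ 2 * orderOf g * (p : ℝ) ^ (-δ) := by
  classical
  obtain ⟨δ, hδ, hbound⟩ := exists_norm_sum_subgroup_le ε hε
  refine ⟨δ, hδ, fun p _ ψ g a hψ hg ha ↦ ?_⟩
  rw [← Fintype.card_zpowers] at hg ⊢
  have hle := hbound p ψ (Subgroup.zpowers g) hψ hg a ha
  rw [← sum_range_orderOf_pow (isOfFinOrder_of_finite g) fun h ↦ ψ (a * (h : ZMod p))] at hle
  simpa only [Units.val_pow_eq_pow_val, Fintype.card_zpowers] using hle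

theorem exists_period_norm_sum_affine_le (ε : ℝ) (hε : 0 < ε) :
    ∃ δ > (0 : ℝ), ∀ (p : ℕ) [Fact p.Prime] {ψ : AddChar (ZMod p) ℂ} {g h β : ZMod p}
      {x : ℕ → ZMod p}, ψ.IsPrimitive → g ≠ 0 → β ≠ 0 → (∀ n, x (n + 1) = g * x n + h) →
        (∀ t, 0 < t → Function.Periodic x t → (p : ℝ) ^ ε ≤ t) →
        ∃ t, 0 < t ∧ t ≤ p ∧ Function.Periodic x t ∧
          ‖∑ n ∈ range t, ψ (β * x n)‖ ≤ 2 * t * (p : ℝ) ^ (-δ) := by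
  obtain ⟨δ, hδ, hbound⟩ := exists_norm_sum_geometric_le ε hε
  refine ⟨δ, hδ, fun p _ ψ g h β x hψ hg hβ hx hlong ↦ ?_⟩
  have hp : 1 < p := (Fact.out : p.Prime).one_lt
  have hnonconst : ¬Function.Periodic x 1 := fun hper ↦ by
    have hle := hlong 1 one_pos hper
    rw [Nat.cast_one] at hle
    exact hle.not_gt (Real.one_lt_rpow (by exact_mod_cast hp) hε)
  rcases eq_or_ne g 1 with rfl | hg₁
  · have hformula := affine_recurrence_one fun n ↦ one_mul (x n) ▸ hx n
    have hh : h ≠ 0 := fun hh ↦ hnonconst fun n ↦ by rw [hx, one_mul, hh, add_zero]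
    refine ⟨p, zero_lt_one.trans hp, le_rfl, fun n ↦ ?_, ?_⟩
    · rw [hformula (n + p), hformula n, Nat.cast_add, ZMod.natCast_self, add_zero]
    · rw [sum_congr rfl fun n _ ↦ congr_arg (ψ <| β * ·) (hformula n),
        sum_range_addChar_arithmetic_eq_zero hψ hβ hh, norm_zero]
      positivity
  · lift g to (ZMod p)ˣ using hg.isUnit
    obtain ⟨y, hy⟩ := exists_affine_fixed_point hg₁ h
    have hformula := affine_recurrence_of_fixed hx hy
    have hx₀ : x 0 - y ≠ 0 := fun h₀ ↦ hnonconst fun n ↦ by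
      rw [hformula (n + 1), hformula n, h₀, mul_zero, mul_zero]
    have hper : Function.Periodic x (orderOf g) := fun n ↦ by
      rw [hformula (n + orderOf g), hformula n, pow_add, ← Units.val_pow_eq_pow_val g (orderOf g),
        pow_orderOf_eq_one, Units.val_one, mul_one]
    refine ⟨orderOf g, orderOf_pos g, ?_, hper, ?_⟩
    · calc orderOf g ≤ Fintype.card (ZMod p)ˣ := orderOf_le_card_univ
        _ ≤ p := (ZMod.card_units p).trans_le (Nat.sub_le _ _)
    · rw [norm_sum_addChar_affine_recurrence hx hy]
      exact hbound p hψ (hlong _ (orderOf_pos g) hper) (mul_ne_zero hβ hx₀)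

theorem exists_norm_sum_last_le (m : ℕ) (hm : 1 ≤ m) (ε : ℝ) (hε : 0 < ε) :
    ∃ δ > (0 : ℝ), ∀ (p : ℕ) [Fact p.Prime] {ψ : AddChar (ZMod p) ℂ} {g h β : ZMod p}
      {w : ℕ → Fin (m + 1) → ZMod p} {N : ℕ}, ψ.IsPrimitive → g ≠ 0 → β ≠ 0 →
        (∀ n, w (n + 1) (Fin.last m) = g * w n (Fin.last m) + h) →
        (p : ℝ) ^ (m + ε) ≤ N → Set.InjOn w (Set.Iio N) →
        ‖∑ n ∈ range N, ψ (β * w n (Fin.last m))‖ ≤ 3 * N * (p : ℝ) ^ (-δ) := by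
  obtain ⟨δ, hδ, hperiod⟩ := exists_period_norm_sum_affine_le ε hε
  refine ⟨min δ ε, lt_min hδ hε, fun p _ ψ g h β w N hψ hg hβ hw hN hinj ↦ ?_⟩
  have hp : (1 : ℝ) ≤ p := by exact_mod_cast (Fact.out : p.Prime).one_le
  have hp₀ : (0 : ℝ) < p := zero_lt_one.trans_le hp
  have hlong (t : ℕ) (ht : 0 < t) (hper : Function.Periodic (fun n ↦ w n (Fin.last m)) t) :
      (p : ℝ) ^ ε ≤ t := by
    have hcount : (N : ℝ) ≤ t * (p : ℝ) ^ m := by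
      exact_mod_cast ZMod.card p ▸ le_mul_card_pow_of_periodic_last ht hinj hper
    rw [add_comm, Real.rpow_add hp₀, Real.rpow_natCast] at hN
    exact le_of_mul_le_mul_right (hN.trans hcount) (by positivity)
  obtain ⟨t, ht, htp, hper, hblock⟩ := hperiod p hψ hg hβ hw hlong
  have htN : (t : ℝ) ≤ N * (p : ℝ) ^ (-ε) := calc
    (t : ℝ) ≤ (p : ℝ) ^ m := by exact_mod_cast htp.trans (Nat.le_self_pow (by lia) p)
    _ = (p : ℝ) ^ (m + ε) * (p : ℝ) ^ (-ε) := by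
        rw [← Real.rpow_add hp₀, add_neg_cancel_right, Real.rpow_natCast]
    _ ≤ N * (p : ℝ) ^ (-ε) := by gcongr
  calc ‖∑ n ∈ range N, ψ (β * w n (Fin.last m))‖
      ≤ (N / t : ℕ) * ‖∑ n ∈ range t, ψ (β * w n (Fin.last m))‖ + t :=
        norm_sum_range_le_of_periodic (fun n ↦ (AddChar.norm_apply _ _).le) ht
          (hper.comp fun z ↦ ψ (β * z)) N
    _ ≤ (N / t : ℕ) * (2 * t * (p : ℝ) ^ (-δ)) + N * (p : ℝ) ^ (-ε) := by gcongr
    _ = 2 * ((N / t * t : ℕ) : ℝ) * (p : ℝ) ^ (-δ) + N * (p : ℝ) ^ (-ε) := by push_cast; ring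
    _ ≤ 2 * N * (p : ℝ) ^ (-min δ ε) + N * (p : ℝ) ^ (-min δ ε) := by
        gcongr
        · exact Nat.div_mul_le_self N t
        · exact min_le_left _ _
        · exact min_le_right _ _
    _ = 3 * N * (p : ℝ) ^ (-min δ ε) := by ring

end AffineRecurrences

section LineRestriction

variable {σ R : Type*} [DecidableEq σ] [CommRing R]

/-- The univariate polynomial obtained from `P` by letting the variable `X_k` vary and fixing the
other variables at the coordinates of `v`. -/
noncomputable def lineRestriction (k : σ) (v : σ → R) : MvPolynomial σ R →ₐ[R] Polynomial R :=
  aeval (Function.update (fun j ↦ Polynomial.C (v j)) k Polynomial.X)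

theorem lineRestriction_X_self (k : σ) (v : σ → R) :
    lineRestriction k v (X k) = Polynomial.X := by
  rw [lineRestriction, aeval_X, Function.update_self]

theorem lineRestriction_X_of_ne {j k : σ} (hjk : j ≠ k) (v : σ → R) :
    lineRestriction k v (X j) = Polynomial.C (v j) := by
  rw [lineRestriction, aeval_X, Function.update_of_ne hjk]

theorem eval_lineRestriction (k : σ) (v : σ → R) (t : R) (P : MvPolynomial σ R) :
    (lineRestriction k v P).eval t = eval (Function.update v k t) P := by
  induction P using MvPolynomial.induction_on with
  | C a => rw [lineRestriction, aeval_C, eval_C, Polynomial.algebraMap_eq, Polynomial.eval_C]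
  | add P Q hP hQ => rw [map_add, map_add, Polynomial.eval_add, hP, hQ]
  | mul_X P j hP =>
    rw [map_mul, map_mul, Polynomial.eval_mul, hP, eval_X]
    rcases eq_or_ne j k with rfl | hj
    · rw [lineRestriction_X_self, Polynomial.eval_X, Function.update_self]
    · rw [lineRestriction_X_of_ne hj, Polynomial.eval_C, Function.update_of_ne hj]

theorem natDegree_lineRestriction_X_pow_le (k j : σ) (v : σ → R) (e : ℕ) :
    (lineRestriction k v (X j ^ e)).natDegree ≤ if j = k then e else 0 := by
  rw [map_pow]
  split_ifs with hj
  · rw [hj, lineRestriction_X_self]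
    exact Polynomial.natDegree_X_pow_le e
  · rw [lineRestriction_X_of_ne hj, ← Polynomial.C_pow, Polynomial.natDegree_C]

theorem natDegree_lineRestriction_le_degreeOf (k : σ) (v : σ → R) (P : MvPolynomial σ R) :
    (lineRestriction k v P).natDegree ≤ degreeOf k P := by
  conv_lhs => rw [P.as_sum, map_sum]
  refine Polynomial.natDegree_sum_le_of_forall_le _ _ fun D hD ↦ ?_
  rw [monomial_eq, ← algebraMap_eq, map_mul, AlgHom.commutes, Polynomial.algebraMap_eq,
    Finsupp.prod, map_prod]
  calc _ ≤ ∑ j ∈ D.support, (lineRestriction k v (X j ^ D j)).natDegree :=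
        (Polynomial.natDegree_C_mul_le _ _).trans (Polynomial.natDegree_prod_le _ _)
    _ ≤ ∑ j ∈ D.support, if j = k then D j else 0 :=
        sum_le_sum fun j _ ↦ natDegree_lineRestriction_X_pow_le k j v (D j)
    _ ≤ D k := by
        rw [sum_ite_eq']
        split_ifs <;> simp
    _ ≤ degreeOf k P := monomial_le_degreeOf k hD

theorem natDegree_lineRestriction_prod [IsDomain R] {k : σ} {v : σ → R} {s : Finset σ}
    (hk : k ∈ s) (hv : ∀ j ∈ s, j ≠ k → v j ≠ 0) (e : σ → ℕ) :
    (lineRestriction k v (∏ j ∈ s, X j ^ e j)).natDegree = e k := by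
  have hself : (lineRestriction k v (X k ^ e k)).natDegree = e k := by
    rw [map_pow, lineRestriction_X_self, Polynomial.natDegree_X_pow]
  have hrest : ∀ j ∈ s.erase k, lineRestriction k v (X j ^ e j) = Polynomial.C (v j ^ e j) :=
    fun j hj ↦ by rw [map_pow, lineRestriction_X_of_ne (ne_of_mem_erase hj), Polynomial.C_pow]
  have hne : ∏ j ∈ s.erase k, v j ^ e j ≠ 0 := prod_ne_zero_iff.2 fun j hj ↦
    pow_ne_zero _ (hv j (mem_of_mem_erase hj) (ne_of_mem_erase hj))
  rw [← mul_prod_erase s _ hk, map_mul, map_prod, prod_congr rfl hrest, ← map_prod,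
    Polynomial.natDegree_mul_C hne, hself]

theorem natDegree_lineRestriction_C_mul_prod_add [IsDomain R] {k : σ} {v : σ → R} {s : Finset σ}
    (hk : k ∈ s) (hv : ∀ j ∈ s, j ≠ k → v j ≠ 0) (e : σ → ℕ) {g : R} (hg : g ≠ 0)
    {P : MvPolynomial σ R} (hP : degreeOf k P < e k) :
    (lineRestriction k v (C g * (∏ j ∈ s, X j ^ e j) + P)).natDegree = e k := by
  have hmain : (lineRestriction k v (C g * ∏ j ∈ s, X j ^ e j)).natDegree = e k := by
    rw [map_mul, ← algebraMap_eq, AlgHom.commutes, Polynomial.algebraMap_eq,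
      Polynomial.natDegree_C_mul hg, natDegree_lineRestriction_prod hk hv]
  rw [map_add, Polynomial.natDegree_add_eq_left_of_natDegree_lt, hmain]
  exact hmain ▸ (natDegree_lineRestriction_le_degreeOf k v P).trans_lt hP

end LineRestriction

section PolynomialSystems

theorem eval_congr_of_support {R : Type*} [CommRing R] {n : ℕ} {i : Fin n}
    {P : MvPolynomial (Fin n) R} (hP : ∀ D ∈ P.support, ∀ j ≤ i, D j = 0) {v v' : Fin n → R}
    (h : ∀ j, i < j → v j = v' j) : eval v P = eval v' P := by
  refine eval₂Hom_congr' rfl (fun j hj _ ↦ h j (not_le.1 fun hji ↦ ?_)) rfl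
  obtain ⟨D, hD, hjD⟩ := (mem_vars_iff_mem_support j).1 hj
  exact Finsupp.mem_support_iff.1 hjD (hP D hD j hji)

theorem totalDegree_le_totalDegree_X_mul_add {σ R : Type*} [CommRing R] {i : σ}
    {G H : MvPolynomial σ R} (hH : ∀ D ∈ H.support, D i = 0) :
    G.totalDegree ≤ (X i * G + H).totalDegree := by
  refine Finset.sup_le fun D hD ↦ ?_
  have hcoeff : coeff (Finsupp.single i 1 + D) H = 0 := by
    by_contra hne
    have hi := hH _ (mem_support_iff.2 hne)
    simp at hi
  have hmem : Finsupp.single i 1 + D ∈ (X i * G + H).support := by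
    rw [mem_support_iff, coeff_add, coeff_X_mul, hcoeff, add_zero]
    exact mem_support_iff.1 hD
  calc (D.sum fun _ e ↦ e) ≤ 1 + D.sum fun _ e ↦ e := Nat.le_add_left _ _
    _ = (Finsupp.single i 1 + D).sum fun _ e ↦ e := by
        rw [Finsupp.sum_add_index' (fun _ ↦ rfl) (fun _ _ _ ↦ rfl), Finsupp.sum_single_index rfl]
    _ ≤ _ := le_totalDegree hmem

theorem IsFSystem.exists_eq_X_mul_add {F : Type*} [Field F] {m : ℕ} {s : ℕ → ℕ → ℕ}
    {P : Fin (m + 1) → MvPolynomial (Fin (m + 1)) F} (hP : IsFSystem m s P) (i : Fin m)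
    (hs : s i (i + 1) ≠ 0) :
    ∃ G H : MvPolynomial (Fin (m + 1)) F, P i.castSucc = X i.castSucc * G + H ∧
      (∀ D ∈ G.support, ∀ j ≤ i.castSucc, D j = 0) ∧
      (∀ D ∈ H.support, ∀ j ≤ i.castSucc, D j = 0) ∧
      ∀ v, (∀ j, i.succ < j → v j ≠ 0) →
        (lineRestriction i.succ v G).natDegree = s i (i + 1) := by
  obtain ⟨G, H, P', g, hg, hPi, hG, hH, hlead, hP', -⟩ := hP.2 i.castSucc i.2
  have hdeg : degreeOf i.succ P' < s i (i + 1) := (degreeOf_lt_iff (Nat.pos_of_ne_zero hs)).2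
    fun D hD ↦ by simpa using hP' D hD i.succ i.castSucc_lt_succ
  refine ⟨G, H, hPi, hG, hH, fun v hv ↦ ?_⟩
  rw [hlead, natDegree_lineRestriction_C_mul_prod_add (k := i.succ) (by simp)
    (fun j hj hne ↦ hv j ((Fin.castSucc_lt_iff_succ_le.1 (mem_filter_univ j |>.1 hj)).lt_of_ne'
      hne)) (fun j ↦ s i.castSucc j) hg (by simpa using hdeg)]
  simp

theorem IsFSystem.exists_isTriangularSystem {F : Type*} [Field F] {m d : ℕ} {s : ℕ → ℕ → ℕ}
    {P : Fin (m + 1) → MvPolynomial (Fin (m + 1)) F} (hP : IsFSystem m s P)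
    (hd : ∀ i, (P i).totalDegree ≤ d) (hs : ∏ i ∈ range m, s i (i + 1) ≠ 0) :
    ∃ G H, IsTriangularSystem d (fun v i ↦ eval v (P i)) G H := by
  have hs' (i : Fin m) : s i (i + 1) ≠ 0 := prod_ne_zero_iff.1 hs i (mem_range.2 i.2)
  obtain ⟨g, h, hg, hlast⟩ := hP.1
  choose G H hPi hG hH hdeg using fun i ↦ hP.exists_eq_X_mul_add i (hs' i)
  refine ⟨fun i v ↦ eval v (Fin.snoc (α := fun _ ↦ MvPolynomial (Fin (m + 1)) F) G (C g) i),
    fun i v ↦ eval v (Fin.snoc (α := fun _ ↦ MvPolynomial (Fin (m + 1)) F) H (C h) i),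
    ⟨fun v i ↦ ?_, fun i v v' hv ↦ ?_, fun i v v' hv ↦ ?_⟩, fun v ↦ by simpa using hg,
    fun i ↦ ⟨s i (i + 1), hs' i, ?_, fun v hv ↦ ?_⟩⟩
  · cases i using Fin.lastCases with
    | last => simp [hlast, mul_comm]
    | cast i => simp [hPi]
  · cases i using Fin.lastCases with
    | last => simp
    | cast i => simpa using eval_congr_of_support (hG i) hv
  · cases i using Fin.lastCases with
    | last => simp
    | cast i => simpa using eval_congr_of_support (hH i) hv
  · calc s i (i + 1) = (lineRestriction i.succ 1 (G i)).natDegree :=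
          (hdeg i 1 fun _ _ ↦ one_ne_zero).symm
      _ ≤ degreeOf i.succ (G i) := natDegree_lineRestriction_le_degreeOf _ _ _
      _ ≤ (G i).totalDegree := degreeOf_le_totalDegree _ _
      _ ≤ (P i.castSucc).totalDegree :=
          hPi i ▸ totalDegree_le_totalDegree_X_mul_add fun D hD ↦ hH i D hD _ le_rfl
      _ ≤ d := hd _
  · exact ⟨lineRestriction i.succ v (G i), hdeg i v hv, fun t ↦ by
      rw [eval_lineRestriction, Fin.snoc_castSucc]⟩

end PolynomialSystems

section ExponentialSums

theorem eP_eq_stdAddChar {p : ℕ} [NeZero p] (x : ZMod p) : eP p x = ZMod.stdAddChar x := by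
  have hcoe := ZMod.stdAddChar_coe (N := p) (x.val : ℤ)
  rw [Int.cast_natCast, ZMod.natCast_zmod_val, Int.cast_natCast] at hcoe
  rw [hcoe, eP]

theorem eq_iterate_of_succ {α : Type*} {f : α → α} {u : ℕ → α} (hu : ∀ n, u (n + 1) = f (u n))
    (n : ℕ) : u n = f^[n] (u 0) := by
  induction n with
  | zero => rfl
  | succ n ih => rw [hu, ih, Function.iterate_succ_apply']

theorem injOn_Iio_of_period_le {α : Type*} {f : α → α} {u : ℕ → α} {τ : ℕ}
    (hu : ∀ n, u (n + 1) = f (u n)) (hτ : 0 < τ) (hper : ∀ n, u (n + τ) = u n)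
    (hmin : ∀ t, 0 < t → (∀ n, u (n + t) = u n) → τ ≤ t) : Set.InjOn u (Set.Iio τ) := by
  have hiter := eq_iterate_of_succ hu
  have hpt : Function.IsPeriodicPt f τ (u 0) := (hiter τ).symm.trans (by simpa using hper 0)
  have hle : τ ≤ Function.minimalPeriod f (u 0) := hmin _ (hpt.minimalPeriod_pos hτ) fun n ↦ by
    rw [hiter, Function.iterate_add_apply, Function.iterate_minimalPeriod, ← hiter]
  rw [funext hiter]
  exact Function.iterate_injOn_Iio_minimalPeriod.mono (Set.Iio_subset_Iio hle)

theorem exists_first_ne_zero {n : ℕ} {R : Type*} [Zero R] {b : Fin n → R} (hb : b ≠ 0) :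
    ∃ i, b i ≠ 0 ∧ ∀ j < i, b j = 0 := by
  obtain ⟨i, hi, hmin⟩ := wellFounded_lt.has_min {i | b i ≠ 0} (Function.ne_iff.1 hb)
  exact ⟨i, hi, fun j hj ↦ not_not.1 fun hbj ↦ hmin j hbj hj⟩

theorem stmt5_general (m d : ℕ) (hm : 1 ≤ m) (ε : ℝ) (hε : 0 < ε) :
    ∃ δ c : ℝ, 0 < δ ∧ 0 < c ∧
      ∀ (s : ℕ → ℕ → ℕ) (p : ℕ), p.Prime →
        ∀ F : Fin (m + 1) → MvPolynomial (Fin (m + 1)) (ZMod p),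
          IsFSystem m s F → (∀ i, (F i).totalDegree ≤ d) →
          (∏ i ∈ range m, s i (i + 1)) ≠ 0 →
          ∀ u : ℕ → Fin (m + 1) → ZMod p,
            (∀ n i, u (n + 1) i = eval (u n) (F i)) →
            ∀ N : ℕ, Set.InjOn u (Set.Iio N) → (p : ℝ) ^ (m + ε) ≤ N →
              ∀ b : Fin (m + 1) → ZMod p, b ≠ 0 →
                ‖∑ n ∈ range N, eP p (∑ i, b i * u n i)‖ ≤ c * N * (p : ℝ) ^ (-δ) := by
  obtain ⟨δ₁, c, hδ₁, hc, hinner⟩ := exists_norm_sum_triangular_iterate_le m d ε hε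
  obtain ⟨δ₂, hδ₂, hlast⟩ := exists_norm_sum_last_le m hm ε hε
  refine ⟨min δ₁ δ₂, max c 3, lt_min hδ₁ hδ₂, lt_max_of_lt_left hc, ?_⟩
  intro s p hp F hF hd hs u hu N hinj hN b hb
  have : Fact p.Prime := ⟨hp⟩
  have hp₁ : (1 : ℝ) ≤ p := by exact_mod_cast hp.one_le
  have hψ := ZMod.isPrimitive_stdAddChar p
  obtain ⟨i, hbi, hbj⟩ := exists_first_ne_zero hb
  simp only [eP_eq_stdAddChar]
  cases i using Fin.lastCases with
  | cast i =>
    obtain ⟨G, H, T⟩ := hF.exists_isTriangularSystem hd hs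
    have hiter := eq_iterate_of_succ (f := fun v i ↦ eval v (F i)) fun n ↦ funext (hu n)
    rw [funext hiter] at hinj ⊢
    refine (hinner p hψ T hbj hbi hN hinj).trans ?_
    gcongr
    exacts [le_max_left _ _, min_le_left _ _]
  | last =>
    obtain ⟨g, h, hg, hFm⟩ := hF.1
    have hrec (n : ℕ) : u (n + 1) (Fin.last m) = g * u n (Fin.last m) + h := by
      simp [hu, hFm]
    have hsum (n : ℕ) : ∑ i, b i * u n i = b (Fin.last m) * u n (Fin.last m) := by
      simp [Fin.sum_univ_castSucc, fun i : Fin m ↦ hbj _ i.castSucc_lt_last]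
    simp only [hsum]
    refine (hlast p hψ hg hbi hrec hN hinj).trans ?_
    gcongr
    exacts [le_max_right _ _, min_le_right _ _]

end ExponentialSums

theorem stmt5 (m d : ℕ) (hm : 1 ≤ m) (hd : 2 ≤ d) (ε : ℝ) (hε : 0 < ε) :
    ∃ δ c : ℝ, 0 < δ ∧ 0 < c ∧
      ∀ (s : ℕ → ℕ → ℕ) (p : ℕ), p.Prime →
        ∀ F : Fin (m + 1) → MvPolynomial (Fin (m + 1)) (ZMod p),
          IsFSystem m s F →
          (Finset.univ.sup fun i => (F i).totalDegree) = d →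
          (∏ i ∈ Finset.range m, s i (i + 1)) ≠ 0 →
          ∀ (u : ℕ → Fin (m + 1) → ZMod p) (τ : ℕ),
            (∀ n i, u (n + 1) i = MvPolynomial.eval (u n) (F i)) →
            0 < τ → (∀ n, u (n + τ) = u n) →
            (∀ t, 0 < t → (∀ n, u (n + t) = u n) → τ ≤ t) →
            ∀ N : ℕ, 0 < N → N ≤ τ → (p : ℝ) ^ ((m : ℝ) + ε) ≤ (N : ℝ) →
              ∀ b : Fin (m + 1) → ZMod p, b ≠ 0 →
                ‖∑ n ∈ Finset.range N, eP p (∑ i : Fin (m + 1), b i * u n i)‖ ≤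
                  c * (N : ℝ) * (p : ℝ) ^ (-δ) := by
  obtain ⟨δ, c, hδ, hc, hbound⟩ := stmt5_general m d hm ε hε
  refine ⟨δ, c, hδ, hc, fun s p hp F hF hdeg hs u τ hu hτ hper hmin N _ hNτ hN b hb ↦
    hbound s p hp F hF (fun i ↦ hdeg ▸ le_sup (f := fun i ↦ (F i).totalDegree) (mem_univ i)) hs u
      hu N ?_ hN b hb⟩
  exact (injOn_Iio_of_period_le (f := fun v i ↦ eval v (F i)) (fun n ↦ funext (hu n)) hτ hper
    hmin).mono (Set.Iio_subset_Iio hNτ)
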